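/- Let 1 < p < ∞ and p* = p/(p−1). Under the standing assumptions on (T, d, μ): if cap_p T > 0, then 1/C ≤ (cap_p T)^{1/p} · (mod_{p*} T)^{1/p*}, where the constant C depends only on the data of T (the constants C_μ, C_P, λ_P). If cap_p T = 0, then mod_{p*} T = ∞. -/

import Mathlib

open MeasureTheory Metric Set Filter Topology
open scoped ENNReal NNReal unitInterval

noncomputable section

namespace Duality

/-! ### Rectifiable curves, line integrals and upper gradients

A rectifiable path is encoded by its arclength-type parametrization: a `1`-Lipschitz
map defined on a compact interval `[a, b]`.  The line integral `∫_γ ρ ds` of a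
nonnegative Borel function is then the Lebesgue integral of `ρ ∘ γ` over `[a, b]`. -/

structure UPath (X : Type*) [PseudoMetricSpace X] where
  a : ℝ
  b : ℝ
  hab : a ≤ b
  toFun : ℝ → X
  lip : LipschitzOnWith 1 toFun (Set.Icc a b)

namespace UPath

variable {X : Type*} [PseudoMetricSpace X]

/-- starting point of the path -/
def start (γ : UPath X) : X := γ.toFun γ.a

/-- end point of the path -/
def finish (γ : UPath X) : X := γ.toFun γ.b

/-- The line integral `∫_γ ρ ds`. -/
def integral (γ : UPath X) (ρ : X → ℝ≥0∞) : ℝ≥0∞ :=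
  ∫⁻ t in Set.Icc γ.a γ.b, ρ (γ.toFun t)

/-- The image (trace) `|γ|` of the path. -/
def trace (γ : UPath X) : Set X := γ.toFun '' Set.Icc γ.a γ.b

/-- The length of the path. -/
def length (γ : UPath X) : ℝ≥0∞ := eVariationOn γ.toFun (Set.Icc γ.a γ.b)

/-- The path stays inside the set `W`. -/
def InSet (γ : UPath X) (W : Set X) : Prop := ∀ t ∈ Set.Icc γ.a γ.b, γ.toFun t ∈ W

/-- The reparametrization of a rectifiable path as a `Path` (continuous map from `[0,1]`). -/
def toPath (γ : UPath X) : Path γ.start γ.finish where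
  toFun := fun t => γ.toFun (γ.a + (t : ℝ) * (γ.b - γ.a))
  continuous_toFun := by
    have hmem : ∀ t : unitInterval, γ.a + (t : ℝ) * (γ.b - γ.a) ∈ Set.Icc γ.a γ.b := by
      intro t
      obtain ⟨ht0, ht1⟩ := t.2
      constructor
      · nlinarith [γ.hab]
      · nlinarith [γ.hab]
    exact γ.lip.continuousOn.comp_continuous (by continuity) hmem
  source' := by simp [start]
  target' := by simp [finish]

end UPath

/-- `ρ` is an upper gradient of `u`. -/
def IsUpperGradient {X : Type*} [PseudoMetricSpace X] {Y : Type*} [PseudoEMetricSpace Y]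
    (u : X → Y) (ρ : X → ℝ≥0∞) : Prop :=
  ∀ γ : UPath X, edist (u γ.start) (u γ.finish) ≤ γ.integral ρ

/-- The `p`-modulus of a family of (rectifiable) paths. -/
def pathMod {X : Type*} [PseudoMetricSpace X] [MeasurableSpace X]
    (μ : Measure X) (p : ℝ) (Γ : Set (UPath X)) : ℝ≥0∞ :=
  ⨅ (ρ : X → ℝ≥0∞) (_ : Measurable ρ ∧ ∀ γ ∈ Γ, 1 ≤ γ.integral ρ),
    ∫⁻ x, ρ x ^ p ∂μ

/-- `ρ` is a `p`-weak upper gradient of `u`: the upper gradient inequality may fail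
only on a path family of zero `p`-modulus. -/
def IsWeakUpperGradient {X : Type*} [PseudoMetricSpace X] [MeasurableSpace X]
    {Y : Type*} [PseudoEMetricSpace Y] (μ : Measure X) (p : ℝ)
    (u : X → Y) (ρ : X → ℝ≥0∞) : Prop :=
  pathMod μ p {γ : UPath X | ¬ edist (u γ.start) (u γ.finish) ≤ γ.integral ρ} = 0

/-- `ρ` is a `p`-weak upper gradient of `u` in the subset `U`. -/
def IsWeakUpperGradientOn {X : Type*} [PseudoMetricSpace X] [MeasurableSpace X]
    {Y : Type*} [PseudoEMetricSpace Y] (μ : Measure X) (p : ℝ) (U : Set X)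
    (u : X → Y) (ρ : X → ℝ≥0∞) : Prop :=
  pathMod (μ.restrict U) p
    {γ : UPath X | γ.InSet U ∧ ¬ edist (u γ.start) (u γ.finish) ≤ γ.integral ρ} = 0

/-- `ρ` is the minimal `p`-weak upper gradient of `u`: it is a `p`-integrable `p`-weak
upper gradient which is `μ`-a.e. dominated by every other one. -/
def IsMinimalWeakUpperGradient {X : Type*} [PseudoMetricSpace X] [MeasurableSpace X]
    {Y : Type*} [PseudoEMetricSpace Y] (μ : Measure X) (p : ℝ)
    (u : X → Y) (ρ : X → ℝ≥0∞) : Prop :=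
  Measurable ρ ∧ IsWeakUpperGradient μ p u ρ ∧ (∫⁻ x, ρ x ^ p ∂μ) < ⊤ ∧
    ∀ ρ' : X → ℝ≥0∞, Measurable ρ' → IsWeakUpperGradient μ p u ρ' →
      (∫⁻ x, ρ' x ^ p ∂μ) < ⊤ → ∀ᵐ x ∂μ, ρ x ≤ ρ' x

/-! ### Doubling measures, Poincaré inequalities, Ahlfors regularity -/

/-- `μ` is a doubling (Borel) measure with doubling constant `Cμ`:
`0 < μ(2B) ≤ Cμ · μ(B) < ∞` for every ball `B` of radius `r < diam T`. -/
def IsDoubling {X : Type*} [MetricSpace X] [MeasurableSpace X]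
    (μ : Measure X) (Cμ : ℝ≥0∞) : Prop :=
  ∀ (x : X) (r : ℝ), 0 < r → r < Metric.diam (Set.univ : Set X) →
    0 < μ (ball x (2 * r)) ∧ μ (ball x (2 * r)) ≤ Cμ * μ (ball x r) ∧
      Cμ * μ (ball x r) < ⊤

/-- `(X, d, μ)` supports a weak `1`-Poincaré inequality with constants `CP`, `lP`:
`⨍_B |u - u_B| dμ ≤ CP · diam B · ⨍_{lP·B} ρ dμ` for every locally integrable `u`
and every upper gradient `ρ` of `u`, and balls have positive finite measure. -/
def SupportsPoincare {X : Type*} [MetricSpace X] [MeasurableSpace X]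
    (μ : Measure X) (CP lP : ℝ) : Prop :=
  (∀ (x : X) (r : ℝ), 0 < r → 0 < μ (ball x r) ∧ μ (ball x r) < ⊤) ∧
  ∀ (u : X → ℝ) (ρ : X → ℝ≥0∞), LocallyIntegrable u μ → Measurable ρ →
    IsUpperGradient u ρ → ∀ (x : X) (r : ℝ), 0 < r →
      (∫⁻ y in ball x r, ENNReal.ofReal |u y - ⨍ z in ball x r, u z ∂μ| ∂μ) /
          μ (ball x r) ≤
        ENNReal.ofReal (CP * Metric.diam (ball x r)) *
          ((∫⁻ y in ball x (lP * r), ρ y ∂μ) / μ (ball x (lP * r)))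

/-- `μ` is Ahlfors `q`-regular with constants `0 < aA ≤ AA`. -/
def IsAhlforsRegular {X : Type*} [MetricSpace X] [MeasurableSpace X]
    (μ : Measure X) (q aA AA : ℝ) : Prop :=
  0 < aA ∧ aA ≤ AA ∧
    ∀ (x : X) (r : ℝ), 0 < r → r < Metric.diam (Set.univ : Set X) →
      ENNReal.ofReal (aA * r ^ q) ≤ μ (ball x r) ∧
        μ (ball x r) ≤ ENNReal.ofReal (AA * r ^ q)

/-! ### The circle `ℝ/ℤ`, loops and degree -/

lemma intCast_coe_eq_zero (k : ℤ) : ((k : ℝ) : UnitAddCircle) = 0 :=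
  (AddCircle.coe_eq_zero_iff _).mpr ⟨k, by simp⟩

/-- The standard loop of degree `k` in `ℝ/ℤ` based at `y`: `t ↦ y + [k t]`. -/
def stdLoop (k : ℤ) (y : UnitAddCircle) : Path y y where
  toFun := fun t => y + (((k : ℝ) * (t : ℝ) : ℝ) : UnitAddCircle)
  continuous_toFun := by
    refine continuous_const.add ?_
    exact (AddCircle.continuous_mk' 1).comp (by continuity)
  source' := by simp
  target' := by
    have h1 : ((1 : unitInterval) : ℝ) = 1 := rfl
    have h : (((k : ℝ) * ((1 : unitInterval) : ℝ) : ℝ) : UnitAddCircle) = 0 := by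
      rw [h1, mul_one]; exact intCast_coe_eq_zero k
    simp [h]

/-- Concatenation of `n` copies of a loop. -/
def loopPow {X : Type*} [TopologicalSpace X] {x : X} (γ : Path x x) : ℕ → Path x x
  | 0 => Path.refl x
  | n + 1 => (loopPow γ n).trans γ

/-- A loop `γ` based at `x` has degree 1 (relative to the chosen generator `α₀` based
at `x₀`) if it is loop-homotopic to a conjugate `η * α₀ * η⁻¹` of `α₀`. -/
def IsDegreeOneLoop {T : Type*} [TopologicalSpace T] (x₀ : T) (α₀ : Path x₀ x₀)
    {x : T} (γ : Path x x) : Prop :=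
  ∃ η : Path x x₀, Path.Homotopic γ (η.trans (α₀.trans η.symm))

/-- A map `f : T → ℝ/ℤ` has degree `k`: it pushes every degree-1 loop based at `x`
to a loop which is loop-homotopic to `[f x] + k·β`, `β (t) = [t]`. -/
def HasDegree {T : Type*} [TopologicalSpace T] (x₀ : T) (α₀ : Path x₀ x₀)
    (f : T → UnitAddCircle) (k : ℤ) : Prop :=
  ∃ hf : Continuous f, ∀ (x : T) (γ : Path x x), IsDegreeOneLoop x₀ α₀ γ →
    Path.Homotopic (γ.map hf) (stdLoop k (f x))

/-- The class of `α₀` generates `π₁(T, x₀) ≅ ℤ`. -/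
def IsGenerator {T : Type*} [TopologicalSpace T] (x₀ : T) (α₀ : Path x₀ x₀) : Prop :=
  Function.Bijective fun k : ℤ =>
    (FundamentalGroup.fromPath (X := TopCat.of T) ⟦α₀⟧ : FundamentalGroup (TopCat.of T) x₀) ^ k

/-- `T` is semilocally simply connected. -/
def SemilocallySimplyConnected (T : Type*) [TopologicalSpace T] : Prop :=
  ∀ x : T, ∃ U ∈ 𝓝 x, ∀ γ : Path x x, (∀ t, γ t ∈ U) → Path.Homotopic γ (Path.refl x)

/-- `f` is a Lipschitz map of degree 1. -/
def DegOneLip {T : Type*} [MetricSpace T] (x₀ : T) (α₀ : Path x₀ x₀)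
    (f : T → UnitAddCircle) : Prop :=
  (∃ L : ℝ≥0, LipschitzWith L f) ∧ HasDegree x₀ α₀ f 1

/-! ### Capacity and surface modulus -/

/-- The degree 1 `p`-capacity of `T`, defined through minimal `p`-weak upper gradients:
the infimum of `∫ ρ^p dμ` over `p`-weak upper gradients `ρ` of Lipschitz degree-1 maps. -/
def cap {T : Type*} [MetricSpace T] [MeasurableSpace T] (μ : Measure T) (p : ℝ)
    (x₀ : T) (α₀ : Path x₀ x₀) : ℝ≥0∞ :=
  ⨅ (f : T → UnitAddCircle) (_ : DegOneLip x₀ α₀ f) (ρ : T → ℝ≥0∞)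
    (_ : Measurable ρ ∧ IsWeakUpperGradient μ p f ρ),
      ∫⁻ x, ρ x ^ p ∂μ

/-- The pointwise Lipschitz constant `Lip f (x)`. -/
def pLip {T : Type*} [MetricSpace T] (f : T → UnitAddCircle) (x : T) : ℝ≥0∞ :=
  Filter.limsup
    (fun r : ℝ => ⨆ y ∈ ball x r, edist (f x) (f y) / ENNReal.ofReal r) (𝓝[>] (0 : ℝ))

/-- The degree 1 `p`-capacity of `T`, defined through pointwise Lipschitz constants. -/
def capLip {T : Type*} [MetricSpace T] [MeasurableSpace T] (μ : Measure T) (p : ℝ)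
    (x₀ : T) (α₀ : Path x₀ x₀) : ℝ≥0∞ :=
  ⨅ (f : T → UnitAddCircle) (_ : DegOneLip x₀ α₀ f), ∫⁻ x, pLip f x ^ p ∂μ

/-- The codimension 1 spherical Hausdorff measure, as a set function:
`H(A) = sup_{δ>0} inf { ∑ μ(B_i)/r_i }`, the infimum being over countable covers of `A`
by balls `B_i` of radii `r_i ≤ δ`. -/
def codimH {T : Type*} [MetricSpace T] [MeasurableSpace T] (μ : Measure T)
    (A : Set T) : ℝ≥0∞ :=
  ⨆ (δ : ℝ) (_ : 0 < δ),
    ⨅ (c : ℕ → T) (r : ℕ → ℝ) (_ : ∀ i, r i ≤ δ)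
      (_ : A ⊆ ⋃ i, ball (c i) (r i)),
        ∑' i, μ (ball (c i) (r i)) / ENNReal.ofReal (r i)

/-- The integral `∫_S g dH` of `g ≥ 0` over `S` against the codimension 1 Hausdorff
measure, via the layer-cake (Choquet) formula. -/
def choquetIntegral {T : Type*} [MetricSpace T] [MeasurableSpace T] (μ : Measure T)
    (S : Set T) (g : T → ℝ≥0∞) : ℝ≥0∞ :=
  ∫⁻ t in Set.Ioi (0 : ℝ), codimH μ {x | x ∈ S ∧ ENNReal.ofReal t < g x}

/-- The family `Γ*` of all level sets `φ⁻¹[0]` of finite codimension 1 Hausdorff measure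
of continuous degree-1 maps `φ : T → ℝ/ℤ`. -/
def Surfaces {T : Type*} [MetricSpace T] [MeasurableSpace T] (μ : Measure T)
    (x₀ : T) (α₀ : Path x₀ x₀) : Set (Set T) :=
  {S | ∃ φ : T → UnitAddCircle, HasDegree x₀ α₀ φ 1 ∧ S = φ ⁻¹' {0} ∧ codimH μ S < ⊤}

/-- The surface `q`-modulus of a family of surfaces, the surfaces being equipped with the
codimension 1 Hausdorff measure. -/
def surfModOf {T : Type*} [MetricSpace T] [MeasurableSpace T] (μ : Measure T) (q : ℝ)
    (𝒮 : Set (Set T)) : ℝ≥0∞ :=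
  ⨅ (ρ : T → ℝ≥0∞) (_ : Measurable ρ ∧ ∀ S ∈ 𝒮, 1 ≤ choquetIntegral μ S ρ),
    ∫⁻ x, ρ x ^ q ∂μ

/-- The surface modulus `mod_q T`. -/
def surfMod {T : Type*} [MetricSpace T] [MeasurableSpace T] (μ : Measure T) (q : ℝ)
    (x₀ : T) (α₀ : Path x₀ x₀) : ℝ≥0∞ :=
  surfModOf μ q (Surfaces μ x₀ α₀)

/-- The family `Γ*` with the `(q-1)`-dimensional Hausdorff measure instead. -/
def SurfacesH {T : Type*} [MetricSpace T] [MeasurableSpace T] [BorelSpace T] (q : ℝ)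
    (x₀ : T) (α₀ : Path x₀ x₀) : Set (Set T) :=
  {S | ∃ φ : T → UnitAddCircle, HasDegree x₀ α₀ φ 1 ∧ S = φ ⁻¹' {0} ∧ μH[q - 1] S < ⊤}

/-- The surface modulus `mod_q T` defined through the `(q-1)`-dimensional Hausdorff
measures `H^{q-1} ⌞ S`, `S ∈ Γ*`. -/
def surfModH {T : Type*} [MetricSpace T] [MeasurableSpace T] [BorelSpace T]
    (μ : Measure T) (q pstar : ℝ) (x₀ : T) (α₀ : Path x₀ x₀) : ℝ≥0∞ :=
  ⨅ (ρ : T → ℝ≥0∞)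
    (_ : Measurable ρ ∧ ∀ S ∈ SurfacesH (T := T) q x₀ α₀, 1 ≤ ∫⁻ x in S, ρ x ∂μH[q - 1]),
      ∫⁻ x, ρ x ^ pstar ∂μ

/-- The standing assumptions 2.1. -/
def Standing {T : Type*} [MetricSpace T] [MeasurableSpace T] (μ : Measure T)
    (Cμ : ℝ≥0∞) (CP lP : ℝ) (x₀ : T) (α₀ : Path x₀ x₀) : Prop :=
  IsDoubling μ Cμ ∧ SupportsPoincare μ CP lP ∧ SemilocallySimplyConnected T ∧
    IsGenerator x₀ α₀ ∧ ∃ f : T → UnitAddCircle, DegOneLip x₀ α₀ f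

/-! ### The universal cover -/

/-- `π` is a local isometry. -/
def IsLocalIsometry {X Y : Type*} [MetricSpace X] [MetricSpace Y] (π : X → Y) : Prop :=
  ∀ x : X, ∃ ε : ℝ, 0 < ε ∧
    ∀ y ∈ ball x ε, ∀ z ∈ ball x ε, dist (π y) (π z) = dist y z

/-- `(T̃, π)` is the universal cover of `T`, with `T̃` carrying the length metric pulled
back by `π` (so that `π` is a local isometry). -/
def CoverSetup {T Tt : Type*} [MetricSpace T] [MetricSpace Tt] (π : Tt → T) : Prop :=
  IsCoveringMap π ∧ Function.Surjective π ∧ IsLocalIsometry π ∧ SimplyConnectedSpace Tt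

/-- `τ` is the deck transformation of the cover `π` determined by
`τ (γ̃ 0) = γ̃ 1` for every lift `γ̃` of every degree-1 loop `γ`. -/
def IsDeck {T Tt : Type*} [MetricSpace T] [MetricSpace Tt] (π : Tt → T)
    (x₀ : T) (α₀ : Path x₀ x₀) (τ : Tt → Tt) : Prop :=
  Continuous τ ∧ (∀ x, π (τ x) = π x) ∧
    ∀ (x : T) (γ : Path x x), IsDegreeOneLoop x₀ α₀ γ →
      ∀ γt : C(unitInterval, Tt), (∀ t, π (γt t) = γ t) → τ (γt 0) = γt 1

/-- `μ̃` is the natural lift of `μ` to the cover: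
`μ̃ (A) = ∫ #(π⁻¹(x) ∩ A) dμ (x)`. -/
def IsLiftedMeasure {T Tt : Type*} [MetricSpace T] [MeasurableSpace T]
    [MetricSpace Tt] [MeasurableSpace Tt] (π : Tt → T) (μ : Measure T)
    (μt : Measure Tt) : Prop :=
  ∀ A : Set Tt, MeasurableSet A → μt A = ∫⁻ x, ((π ⁻¹' {x} ∩ A).encard : ℝ≥0∞) ∂μ

/-! ### Newtonian spaces -/

/-- The seminorm of `N^{1,p}(U)`. -/
def NSeminorm {X : Type*} [PseudoMetricSpace X] [MeasurableSpace X] (μ : Measure X)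
    (p : ℝ) (U : Set X) (f : X → ℝ) : ℝ≥0∞ :=
  (∫⁻ x in U, ENNReal.ofReal |f x| ^ p ∂μ) ^ (1 / p) +
    ⨅ (ρ : X → ℝ≥0∞) (_ : Measurable ρ ∧ IsWeakUpperGradientOn μ p U f ρ),
      (∫⁻ x in U, ρ x ^ p ∂μ) ^ (1 / p)

/-- `f ∈ N^{1,p}_loc`. -/
def MemNloc {X : Type*} [PseudoMetricSpace X] [MeasurableSpace X] (μ : Measure X)
    (p : ℝ) (f : X → ℝ) : Prop :=
  ∀ U : Set X, IsOpen U → IsCompact (closure U) →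
    (∫⁻ x in U, ENNReal.ofReal |f x| ^ p ∂μ) < ⊤ ∧
      ∃ ρ : X → ℝ≥0∞, Measurable ρ ∧ IsWeakUpperGradientOn μ p U f ρ ∧
        (∫⁻ x in U, ρ x ^ p ∂μ) < ⊤

/-- The collection `F`: nonnegative Borel functions `ρ` on `T` such that `ρ ∘ π` is a
`p`-weak upper gradient of some `f ∈ N^{1,p}_loc (T̃)` with `f ∘ τ - f = 1` a.e. -/
def MemF {T Tt : Type*} [MetricSpace T] [MeasurableSpace T] [MetricSpace Tt]
    [MeasurableSpace Tt] (π : Tt → T) (τ : Tt → Tt) (μt : Measure Tt) (p : ℝ)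
    (ρ : T → ℝ≥0∞) : Prop :=
  Measurable ρ ∧ ∃ f : Tt → ℝ, MemNloc μt p f ∧ (∀ᵐ x ∂μt, f (τ x) - f x = 1) ∧
    IsWeakUpperGradient μt p f (ρ ∘ π)

/-- The capacity `cap_p^F T`. -/
def capF {T Tt : Type*} [MetricSpace T] [MeasurableSpace T] [MetricSpace Tt]
    [MeasurableSpace Tt] (μ : Measure T) (π : Tt → T) (τ : Tt → Tt) (μt : Measure Tt)
    (p : ℝ) : ℝ≥0∞ :=
  ⨅ (ρ : T → ℝ≥0∞) (_ : MemF π τ μt p ρ), ∫⁻ x, ρ x ^ p ∂μ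

/-! ### Miscellaneous operators -/

/-- The restricted Hardy–Littlewood maximal operator `M_R`. -/
def restrMax {T : Type*} [MetricSpace T] [MeasurableSpace T] (μ : Measure T)
    (R : ℝ≥0∞) (g : T → ℝ≥0∞) (x : T) : ℝ≥0∞ :=
  ⨆ (s : ℝ) (_ : 0 < s ∧ ENNReal.ofReal s ≤ R),
    (∫⁻ y in ball x s, g y ∂μ) / μ (ball x s)

/-- The upper Lebesgue integral. -/
def upperLintegral {Y : Type*} [MeasurableSpace Y] (ν : Measure Y)
    (F : Y → ℝ≥0∞) : ℝ≥0∞ :=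
  ⨅ (G : Y → ℝ≥0∞) (_ : Measurable G ∧ ∀ y, F y ≤ G y), ∫⁻ y, G y ∂ν

/-! ### The sets `Ω` and the functions `ψ̃`, `ζ`, `ψ` of Section 4.3 -/

/-- The set of points reachable from `A` by a rectifiable path inside `W`. -/
def reach {T : Type*} [MetricSpace T] (A W : Set T) : Set T :=
  {x | ∃ γ : UPath T, γ.start ∈ A ∧ γ.finish = x ∧ γ.InSet W}

/-- `inf_γ ∫_γ ρ ds` over rectifiable paths connecting `A` to `x` inside `W`. -/
def pathDist {T : Type*} [MetricSpace T] (ρ : T → ℝ≥0∞) (A W : Set T) (x : T) : ℝ≥0∞ :=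
  ⨅ (γ : UPath T) (_ : γ.start ∈ A ∧ γ.finish = x ∧ γ.InSet W), γ.integral ρ

open scoped Classical in
/-- The function `ψ̃`. -/
def psiTilde {T : Type*} [MetricSpace T] (ρ : T → ℝ≥0∞) (A W : Set T) (x : T) : ℝ :=
  if x ∈ reach A W then (pathDist ρ A W x).toReal else 0

/-- The function `min {1, ψ̃}`. -/
def zeta {T : Type*} [MetricSpace T] (ρ : T → ℝ≥0∞) (A W : Set T) (x : T) : ℝ :=
  min 1 (psiTilde ρ A W x)

/-- The competing admissible map `ψ = [min {1, ψ̃}] : T → ℝ/ℤ`. -/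
def psiMap {T : Type*} [MetricSpace T] (ρ : T → ℝ≥0∞) (A W : Set T) (x : T) :
    UnitAddCircle :=
  ((zeta ρ A W x : ℝ) : UnitAddCircle)

end Duality

/-!
A Lipschitz map `f : T → ℝ/ℤ` of degree one is swept out by its level sets, and `f⁻¹{t}` is the
zero level of `f - t`, which again has degree one. Covering a set by small balls `B(x, r)`, on
which `f` varies by at most about `pLip f x * r`, shows that `A ↦ ∫* H(f⁻¹{t} ∩ A) dt` is bounded
by a multiple of `∫_A pLip f dμ`, and the Poincaré inequality, telescoped along balls of
geometrically growing radii, gives `pLip f ≤ K ρ` almost everywhere for every integrable upper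
gradient `ρ` of `f`. Hence almost every level set lies in `Γ*`, and every `g` admissible for `Γ*`
satisfies `1 ≤ ∫* ∫_{f⁻¹{t}} g dH dt ≤ C ∫ g ρ dμ`. Hölder's inequality bounds the last integral
by `‖g‖_{p*} ‖ρ‖_p`, and the infima over `g` and over `(f, ρ)` are the modulus and the capacity.
-/

namespace Duality

section UpperIntegral

lemma le_mul_of_forall_pos_le_mul_add {a b s : ℝ≥0∞} {K : ℝ≥0} (hs : s ≠ ⊤)
    (h : ∀ ε : ℝ≥0, 0 < ε → b ≤ K * (a + ε * s)) : b ≤ K * a := by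
  have hcoe : Tendsto (fun ε : ℝ≥0 => (ε : ℝ≥0∞)) (𝓝[>] 0) (𝓝 (0 : ℝ≥0)) :=
    ENNReal.continuous_coe.continuousAt.continuousWithinAt
  have hlim : Tendsto (fun ε : ℝ≥0 => K * (a + ε * s)) (𝓝[>] 0)
      (𝓝 (K * (a + (0 : ℝ≥0) * s))) :=
    ENNReal.Tendsto.const_mul ((ENNReal.Tendsto.mul_const hcoe (Or.inr hs)).const_add _)
      (Or.inr ENNReal.coe_ne_top)
  simp only [ENNReal.coe_zero, zero_mul, add_zero] at hlim
  exact ge_of_tendsto hlim (eventually_mem_nhdsWithin.mono h)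

variable {Y : Type*} [MeasurableSpace Y] {ν : Measure Y}

lemma upperLintegral_le_lintegral {F G : Y → ℝ≥0∞} (hG : Measurable G) (hFG : ∀ y, F y ≤ G y) :
    upperLintegral ν F ≤ ∫⁻ y, G y ∂ν :=
  iInf₂_le G ⟨hG, hFG⟩

lemma upperLintegral_lt_iff {F : Y → ℝ≥0∞} {b : ℝ≥0∞} :
    upperLintegral ν F < b ↔
      ∃ G : Y → ℝ≥0∞, (Measurable G ∧ ∀ y, F y ≤ G y) ∧ ∫⁻ y, G y ∂ν < b := by
  simp only [upperLintegral, iInf_lt_iff, exists_prop]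

lemma upperLintegral_mono {F G : Y → ℝ≥0∞} (hFG : ∀ y, F y ≤ G y) :
    upperLintegral ν F ≤ upperLintegral ν G :=
  le_iInf₂ fun _ hH => upperLintegral_le_lintegral hH.1 fun y => (hFG y).trans (hH.2 y)

lemma exists_measurable_majorant (ν : Measure Y) (F : Y → ℝ≥0∞) :
    ∃ G : Y → ℝ≥0∞, Measurable G ∧ (∀ y, F y ≤ G y) ∧ ∫⁻ y, G y ∂ν = upperLintegral ν F := by
  suffices ∃ G : Y → ℝ≥0∞, Measurable G ∧ (∀ y, F y ≤ G y) ∧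
      ∫⁻ y, G y ∂ν ≤ upperLintegral ν F by
    obtain ⟨G, hG, hFG, hle⟩ := this
    exact ⟨G, hG, hFG, hle.antisymm (upperLintegral_le_lintegral hG hFG)⟩
  by_cases htop : upperLintegral ν F = ⊤
  · exact ⟨fun _ => ⊤, measurable_const, fun _ => le_top, by simp [htop]⟩
  choose G hG hlt using fun n : ℕ => upperLintegral_lt_iff.1 <|
    ENNReal.lt_add_right htop (ENNReal.inv_ne_zero.2 (ENNReal.natCast_ne_top n))
  refine ⟨fun y => ⨅ n, G n y, Measurable.iInf fun n => (hG n).1,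
    fun y => le_iInf fun n => (hG n).2 y, ?_⟩
  have hlim : Tendsto (fun n : ℕ => upperLintegral ν F + (n : ℝ≥0∞)⁻¹) atTop
      (𝓝 (upperLintegral ν F)) := by
    simpa using tendsto_const_nhds.add ENNReal.tendsto_inv_nat_nhds_zero
  exact ge_of_tendsto' hlim fun n =>
    (lintegral_mono fun y => iInf_le (fun n => G n y) n).trans (hlt n).le

lemma upperLintegral_const_mul_le (a : ℝ≥0∞) (F : Y → ℝ≥0∞) :
    upperLintegral ν (fun y => a * F y) ≤ a * upperLintegral ν F := by
  obtain ⟨G, hG, hFG, hint⟩ := exists_measurable_majorant ν F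
  rw [← hint, ← lintegral_const_mul a hG]
  exact upperLintegral_le_lintegral (hG.const_mul a) fun y => by gcongr; exact hFG y

lemma upperLintegral_tsum_le {ι : Type*} [Countable ι] (F : ι → Y → ℝ≥0∞) :
    upperLintegral ν (fun y => ∑' i, F i y) ≤ ∑' i, upperLintegral ν (F i) := by
  choose G hG hFG hint using fun i => exists_measurable_majorant ν (F i)
  simp only [← hint]
  rw [← lintegral_tsum fun i => (hG i).aemeasurable]
  exact upperLintegral_le_lintegral (Measurable.tsum hG)
    fun y => ENNReal.tsum_le_tsum fun i => hFG i y

lemma upperLintegral_iSup_le {F : ℕ → Y → ℝ≥0∞} (hF : Monotone F) {C : ℝ≥0∞}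
    (hC : ∀ n, upperLintegral ν (F n) ≤ C) : upperLintegral ν (fun y => ⨆ n, F n y) ≤ C := by
  choose G hG hFG hint using fun n => exists_measurable_majorant ν (F n)
  have hle : ∀ y, ⨆ n, F n y ≤ liminf (fun n => G n y) atTop := fun y =>
    iSup_le fun n => le_liminf_of_le (by isBoundedDefault) <|
      (eventually_ge_atTop n).mono fun k hk => (hF hk y).trans (hFG k y)
  calc upperLintegral ν (fun y => ⨆ n, F n y)
      ≤ ∫⁻ y, liminf (fun n => G n y) atTop ∂ν :=
        upperLintegral_le_lintegral (Measurable.liminf hG) hle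
    _ ≤ liminf (fun n => ∫⁻ y, G n y ∂ν) atTop := lintegral_liminf_le hG
    _ ≤ C := liminf_le_of_frequently_le' (Frequently.of_forall fun n => (hint n).trans_le (hC n))

lemma lintegral_le_upperLintegral {F G : Y → ℝ≥0∞} (hGF : ∀ᵐ y ∂ν, G y ≤ F y) :
    ∫⁻ y, G y ∂ν ≤ upperLintegral ν F :=
  le_iInf₂ fun _ hH => lintegral_mono_ae (hGF.mono fun y hy => hy.trans (hH.2 y))

lemma ae_lt_top_of_upperLintegral_ne_top {F : Y → ℝ≥0∞} (hF : upperLintegral ν F ≠ ⊤) :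
    ∀ᵐ y ∂ν, F y < ⊤ := by
  obtain ⟨G, hG, hFG, hint⟩ := exists_measurable_majorant ν F
  exact (ae_lt_top hG (hint ▸ hF)).mono fun y hy => (hFG y).trans_lt hy

end UpperIntegral

section CodimensionOneMeasure

variable {T : Type*} [MetricSpace T] [MeasurableSpace T]

/-- The premeasure at scale `δ` of the codimension one spherical Hausdorff measure `codimH`:
only covers by balls of radius at most `δ` compete. -/
def codimHPre (μ : Measure T) (δ : ℝ) (A : Set T) : ℝ≥0∞ :=
  ⨅ (c : ℕ → T) (r : ℕ → ℝ) (_ : ∀ i, r i ≤ δ) (_ : A ⊆ ⋃ i, ball (c i) (r i)),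
    ∑' i, μ (ball (c i) (r i)) / ENNReal.ofReal (r i)

lemma codimHPre_lt_iff {μ : Measure T} {δ : ℝ} {A : Set T} {b : ℝ≥0∞} :
    codimHPre μ δ A < b ↔ ∃ (c : ℕ → T) (r : ℕ → ℝ), (∀ i, r i ≤ δ) ∧
      A ⊆ ⋃ i, ball (c i) (r i) ∧ ∑' i, μ (ball (c i) (r i)) / ENNReal.ofReal (r i) < b := by
  simp only [codimHPre, iInf_lt_iff, exists_prop]

lemma codimHPre_anti (μ : Measure T) {δ δ' : ℝ} (h : δ ≤ δ') (A : Set T) :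
    codimHPre μ δ' A ≤ codimHPre μ δ A :=
  iInf₂_mono fun _ _ => le_iInf₂ fun hr hA => iInf₂_le (fun i => (hr i).trans h) hA

lemma codimHPre_mono (μ : Measure T) (δ : ℝ) {A B : Set T} (hAB : A ⊆ B) :
    codimHPre μ δ A ≤ codimHPre μ δ B :=
  iInf₂_mono fun _ _ => le_iInf₂ fun hr hB => iInf₂_le hr (hAB.trans hB)

lemma codimHPre_le_tsum [Nonempty T] (μ : Measure T) {δ : ℝ} (hδ : 0 ≤ δ) {A : Set T}
    {ι : Type*} [Countable ι] {c : ι → T} {r : ι → ℝ} (hr : ∀ i, r i ≤ δ)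
    (hA : A ⊆ ⋃ i, ball (c i) (r i)) :
    codimHPre μ δ A ≤ ∑' i, μ (ball (c i) (r i)) / ENNReal.ofReal (r i) := by
  obtain ⟨e, he⟩ := exists_injective_nat ι
  let c' : ℕ → T := Function.extend e c fun _ => Classical.arbitrary T
  let r' : ℕ → ℝ := Function.extend e r 0
  have hc' : ∀ i, c' (e i) = c i := he.extend_apply _ _
  have hr' : ∀ i, r' (e i) = r i := he.extend_apply _ _
  have hr0 : ∀ n ∉ range e, r' n = 0 := fun n hn => Function.extend_apply' _ _ _ hn
  have hr'δ : ∀ n, r' n ≤ δ := fun n => by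
    by_cases hn : n ∈ range e
    · obtain ⟨i, rfl⟩ := hn
      exact (hr' i).trans_le (hr i)
    · exact (hr0 n hn).trans_le hδ
  have hA' : A ⊆ ⋃ n, ball (c' n) (r' n) := hA.trans <| iUnion_subset fun i =>
    subset_iUnion_of_subset (e i) (by rw [hc', hr'])
  calc codimHPre μ δ A ≤ ∑' n, μ (ball (c' n) (r' n)) / ENNReal.ofReal (r' n) :=
        (iInf₂_le c' r').trans (iInf₂_le hr'δ hA')
    _ = ∑' i, μ (ball (c' (e i)) (r' (e i))) / ENNReal.ofReal (r' (e i)) := by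
        refine (he.tsum_eq (Function.support_subset_iff'.2 fun n hn => ?_)).symm
        simp [hr0 n hn]
    _ = ∑' i, μ (ball (c i) (r i)) / ENNReal.ofReal (r i) := by simp_rw [hc', hr']

lemma codimHPre_iUnion_le [Nonempty T] (μ : Measure T) {δ : ℝ} (hδ : 0 ≤ δ) (A : ℕ → Set T) :
    codimHPre μ δ (⋃ n, A n) ≤ ∑' n, codimHPre μ δ (A n) := by
  refine ENNReal.le_of_forall_pos_le_add fun ε hε hfin => ?_
  obtain ⟨ε', hε', hsum⟩ :=
    ENNReal.exists_pos_sum_of_countable (ENNReal.coe_ne_zero.2 hε.ne') ℕ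
  choose c r hr hA hlt using fun n => codimHPre_lt_iff.1 <|
    ENNReal.lt_add_right (ENNReal.ne_top_of_tsum_ne_top hfin.ne n)
      (ENNReal.coe_ne_zero.2 (hε' n).ne')
  calc codimHPre μ δ (⋃ n, A n)
      ≤ ∑' i : ℕ × ℕ, μ (ball (c i.1 i.2) (r i.1 i.2)) / ENNReal.ofReal (r i.1 i.2) := by
        refine codimHPre_le_tsum μ hδ (fun i => hr i.1 i.2) (iUnion_subset fun n => ?_)
        exact (hA n).trans (iUnion_subset fun i =>
          subset_iUnion (fun j : ℕ × ℕ => ball (c j.1 j.2) (r j.1 j.2)) (n, i))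
    _ = ∑' n, ∑' i, μ (ball (c n i) (r n i)) / ENNReal.ofReal (r n i) := ENNReal.tsum_prod'
    _ ≤ ∑' n, (codimHPre μ δ (A n) + ε' n) := ENNReal.tsum_le_tsum fun n => (hlt n).le
    _ ≤ ∑' n, codimHPre μ δ (A n) + ε := by
        rw [ENNReal.tsum_add]
        gcongr

lemma codimH_eq_iSup_codimHPre (μ : Measure T) (A : Set T) :
    codimH μ A = ⨆ n : ℕ, codimHPre μ (1 / (n + 1)) A := by
  refine le_antisymm (iSup₂_le fun δ hδ => ?_)
    (iSup_le fun n => le_iSup₂_of_le (1 / (n + 1)) Nat.one_div_pos_of_nat le_rfl)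
  obtain ⟨n, hn⟩ := exists_nat_one_div_lt hδ
  exact le_iSup_of_le n (codimHPre_anti μ hn.le A)

lemma codimH_mono (μ : Measure T) {A B : Set T} (hAB : A ⊆ B) : codimH μ A ≤ codimH μ B :=
  iSup₂_mono fun δ _ => codimHPre_mono μ δ hAB

lemma codimH_iUnion_le [Nonempty T] (μ : Measure T) (A : ℕ → Set T) :
    codimH μ (⋃ n, A n) ≤ ∑' n, codimH μ (A n) :=
  iSup₂_le fun δ hδ => (codimHPre_iUnion_le μ hδ.le A).trans <|
    ENNReal.tsum_le_tsum fun n => le_iSup₂ (f := fun δ (_ : 0 < δ) => codimHPre μ δ (A n)) δ hδ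

lemma codimH_empty (μ : Measure T) [Nonempty T] : codimH μ (∅ : Set T) = 0 := by
  refine le_antisymm (iSup₂_le fun δ hδ => ?_) zero_le
  exact (codimHPre_le_tsum μ hδ.le (c := (nofun : Empty → T)) (r := nofun) nofun
    (empty_subset _)).trans_eq tsum_empty

/-- The outer measure `A ↦ ∫* H(f⁻¹{t} ∩ A) dt` built from the codimension one measures of the
level sets of `f`; the coarea inequality bounds it by an integral over `A`. The upper integral
spares us the measurability of `t ↦ H(f⁻¹{t} ∩ A)`. -/
def levelSetOuterMeasure [Nonempty T] {Y : Type*} [MeasurableSpace Y] (ν : Measure Y)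
    (μ : Measure T) (f : T → Y) : OuterMeasure T where
  measureOf A := upperLintegral ν fun t => codimH μ (f ⁻¹' {t} ∩ A)
  empty := by
    refine nonpos_iff_eq_zero.1 ((upperLintegral_le_lintegral (G := 0) measurable_const
      fun t => ?_).trans_eq lintegral_zero)
    simp [codimH_empty]
  mono hAB := upperLintegral_mono fun t => codimH_mono μ (inter_subset_inter_right _ hAB)
  iUnion_nat A _ := (upperLintegral_mono fun t => by
    rw [inter_iUnion]
    exact codimH_iUnion_le μ _).trans (upperLintegral_tsum_le _)

lemma levelSetOuterMeasure_apply [Nonempty T] {Y : Type*} [MeasurableSpace Y] (ν : Measure Y)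
    (μ : Measure T) (f : T → Y) (A : Set T) :
    levelSetOuterMeasure ν μ f A = upperLintegral ν fun t => codimH μ (f ⁻¹' {t} ∩ A) :=
  rfl

end CodimensionOneMeasure

section Doubling

lemma ball_eq_univ_of_diam_lt {X : Type*} [PseudoMetricSpace X] [BoundedSpace X] (x : X) {r : ℝ}
    (hr : diam (univ : Set X) < r) : ball x r = univ :=
  eq_univ_of_forall fun y => mem_ball.2 <|
    (dist_le_diam_of_mem (Bornology.IsBounded.all univ) (mem_univ y) (mem_univ x)).trans_lt hr

variable {T : Type*} [MetricSpace T] [MeasurableSpace T] {μ : Measure T} {c : ℝ≥0}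

/-- `μ` is doubling at all scales, whereas `IsDoubling` tests only radii below the diameter. -/
def IsGloballyDoubling (μ : Measure T) (c : ℝ≥0) : Prop :=
  ∀ (x : T) (r : ℝ), 0 < r → μ (ball x (2 * r)) ≤ c * μ (ball x r)

lemma IsDoubling.measure_ball_two_mul_le_toNNReal {Cμ : ℝ≥0∞} (h : IsDoubling μ Cμ) (x : T)
    {r : ℝ} (hr : 0 < r) (hrd : r < diam (univ : Set T)) :
    μ (ball x (2 * r)) ≤ Cμ.toNNReal * μ (ball x r) := by
  obtain ⟨hpos, hle, hfin⟩ := h x r hr hrd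
  have hball : μ (ball x r) ≠ 0 := fun h0 => hpos.ne' (by simpa [h0] using hle)
  have hC : Cμ ≠ ⊤ := fun htop => hfin.ne (by rw [htop, ENNReal.top_mul hball])
  rwa [ENNReal.coe_toNNReal hC]

lemma IsDoubling.isGloballyDoubling [BoundedSpace T] {Cμ : ℝ≥0∞} (h : IsDoubling μ Cμ) :
    IsGloballyDoubling μ (max 1 Cμ.toNNReal) := by
  intro x r hr
  rcases lt_trichotomy r (diam (univ : Set T)) with hlt | heq | hgt
  · refine (h.measure_ball_two_mul_le_toNNReal x hr hlt).trans ?_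
    gcongr
    exact le_max_right _ _
  · calc μ (ball x (2 * r)) ≤ μ (ball x (2 * (3 / 4 * r))) := by
          rw [ball_eq_univ_of_diam_lt x (r := 2 * (3 / 4 * r)) (by linarith)]
          exact measure_mono (subset_univ _)
      _ ≤ Cμ.toNNReal * μ (ball x (3 / 4 * r)) :=
          h.measure_ball_two_mul_le_toNNReal x (by positivity) (by linarith)
      _ ≤ (max 1 Cμ.toNNReal : ℝ≥0) * μ (ball x r) := by
          gcongr
          · exact le_max_right _ _
          · linarith
  · rw [ball_eq_univ_of_diam_lt x hgt]
    refine (measure_mono (subset_univ _)).trans (le_mul_of_one_le_left' ?_)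
    exact ENNReal.coe_le_coe.2 (le_max_left _ _)

lemma IsGloballyDoubling.measure_ball_two_pow_mul_le (h : IsGloballyDoubling μ c) (x : T) {r : ℝ}
    (hr : 0 < r) (n : ℕ) : μ (ball x (2 ^ n * r)) ≤ (c ^ n : ℝ≥0) * μ (ball x r) := by
  induction n with
  | zero => simp
  | succ n ih =>
    calc μ (ball x (2 ^ (n + 1) * r)) = μ (ball x (2 * (2 ^ n * r))) := by ring_nf
      _ ≤ c * μ (ball x (2 ^ n * r)) := h x _ (by positivity)
      _ ≤ c * ((c ^ n : ℝ≥0) * μ (ball x r)) := by gcongr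
      _ = (c ^ (n + 1) : ℝ≥0) * μ (ball x r) := by push_cast; ring

lemma IsGloballyDoubling.measure_ball_six_mul_le (h : IsGloballyDoubling μ c) (x : T) {r : ℝ}
    (hr : 0 < r) : μ (ball x (6 * r)) ≤ (c ^ 3 : ℝ≥0) * μ (closedBall x r) :=
  calc μ (ball x (6 * r)) ≤ μ (ball x (2 ^ 3 * r)) := by gcongr; norm_num
    _ ≤ (c ^ 3 : ℝ≥0) * μ (ball x r) := h.measure_ball_two_pow_mul_le x hr 3
    _ ≤ (c ^ 3 : ℝ≥0) * μ (closedBall x r) := by gcongr; exact ball_subset_closedBall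

lemma IsGloballyDoubling.isUnifLocDoublingMeasure (h : IsGloballyDoubling μ c) :
    IsUnifLocDoublingMeasure μ := by
  refine ⟨c ^ 3, eventually_mem_nhdsWithin.mono fun r hr x => ?_⟩
  have hr : 0 < r := hr
  exact (measure_mono (closedBall_subset_ball (by linarith))).trans
    (h.measure_ball_six_mul_le x hr)

lemma SupportsPoincare.isFiniteMeasure [Nonempty T] [BoundedSpace T] {CP lP : ℝ}
    (h : SupportsPoincare μ CP lP) : IsFiniteMeasure μ := by
  obtain ⟨x⟩ := ‹Nonempty T›
  refine ⟨?_⟩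
  rw [← ball_eq_univ_of_diam_lt x (lt_add_one (diam (univ : Set T)))]
  exact (h.1 x _ (by positivity)).2

lemma SupportsPoincare.isOpenPosMeasure {CP lP : ℝ} (h : SupportsPoincare μ CP lP) :
    μ.IsOpenPosMeasure where
  open_pos U hU hne := by
    obtain ⟨x, hx⟩ := hne
    obtain ⟨r, hr, hsub⟩ := Metric.isOpen_iff.1 hU x hx
    exact ((h.1 x r hr).1.trans_le (measure_mono hsub)).ne'

lemma countable_of_pairwiseDisjoint_closedBall [OpensMeasurableSpace T] [SFinite μ]
    [μ.IsOpenPosMeasure] {u : Set T} {r : T → ℝ} (hr : ∀ x ∈ u, 0 < r x)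
    (hu : u.PairwiseDisjoint fun x => closedBall x (r x)) : u.Countable := by
  have hcount : {x : u | 0 < μ (closedBall (x : T) (r x))}.Countable :=
    Measure.countable_meas_pos_of_disjoint_iUnion (fun _ => measurableSet_closedBall)
      hu.subtype
  have huniv : {x : u | 0 < μ (closedBall (x : T) (r x))} = univ :=
    eq_univ_of_forall fun x => measure_closedBall_pos μ _ (hr x x.2)
  rwa [huniv, countable_univ_iff] at hcount

lemma secondCountableTopology_of_isOpenPosMeasure [OpensMeasurableSpace T] (μ : Measure T)
    [SFinite μ] [μ.IsOpenPosMeasure] : SecondCountableTopology T := by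
  refine secondCountable_of_almost_dense_set fun ε hε => ?_
  obtain ⟨u, -, hdisj, hcov⟩ := Vitali.exists_disjoint_subfamily_covering_enlargement_closedBall
    (univ : Set T) id (fun _ => ε / 5) (ε / 5) (fun _ _ => le_rfl) 5 (by norm_num)
  refine ⟨u, countable_of_pairwiseDisjoint_closedBall (μ := μ) (fun _ _ => by positivity) hdisj,
    fun x => ?_⟩
  obtain ⟨y, hy, hxy⟩ := hcov x (mem_univ x)
  have hx := hxy (mem_closedBall_self (by positivity))
  exact ⟨y, hy, (mem_closedBall.1 hx).trans_eq (by ring)⟩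

end Doubling

section Eilenberg

variable {T : Type*} [MetricSpace T]

lemma pLip_le_of_eventually_mapsTo_closedBall {f : T → UnitAddCircle} {x : T} {M : ℝ≥0}
    (h : ∀ᶠ s in 𝓝[>] (0 : ℝ), MapsTo f (ball x s) (closedBall (f x) (M * s))) :
    pLip f x ≤ M := by
  refine limsup_le_of_le (by isBoundedDefault) ?_
  filter_upwards [h] with s hs
  refine iSup₂_le fun y hy => ENNReal.div_le_of_le_mul ?_
  rw [edist_comm, edist_dist, ← ENNReal.ofReal_coe_nnreal, ← ENNReal.ofReal_mul M.coe_nonneg]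
  exact ENNReal.ofReal_le_ofReal (hs hy)

lemma pLip_le_of_lipschitzWith {f : T → UnitAddCircle} {L : ℝ≥0} (hf : LipschitzWith L f) (x : T) :
    pLip f x ≤ L :=
  pLip_le_of_eventually_mapsTo_closedBall <| .of_forall fun s y hy =>
    (hf.dist_le_mul y x).trans (by gcongr; exact (mem_ball.1 hy).le)

lemma eventually_mapsTo_closedBall_of_pLip_lt {f : T → UnitAddCircle} {x : T} {M : ℝ≥0}
    (h : pLip f x < M) :
    ∀ᶠ s in 𝓝[>] (0 : ℝ), MapsTo f (ball x s) (closedBall (f x) (M * s)) := by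
  filter_upwards [eventually_lt_of_limsup_lt h, self_mem_nhdsWithin] with s hlt hs y hy
  have hs : 0 < s := hs
  have hle : edist (f x) (f y) ≤ M * ENNReal.ofReal s :=
    (ENNReal.div_le_iff (by simpa using hs) ENNReal.ofReal_ne_top).1
      ((le_iSup₂ (f := fun y _ => edist (f x) (f y) / ENNReal.ofReal s) y hy).trans hlt.le)
  rwa [mem_closedBall', ← ENNReal.ofReal_le_ofReal_iff (by positivity), ← edist_dist,
    ENNReal.ofReal_mul M.coe_nonneg, ENNReal.ofReal_coe_nnreal]

variable [MeasurableSpace T] {μ : Measure T}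

lemma exists_disjoint_closedBall_cover [OpensMeasurableSpace T] [SFinite μ] [μ.IsOpenPosMeasure]
    {A : Set T} {r : T → ℝ} {R : ℝ} (hr : ∀ x ∈ A, 0 < r x) (hrR : ∀ x ∈ A, r x ≤ R) :
    ∃ u ⊆ A, u.Countable ∧ (u.PairwiseDisjoint fun x => closedBall x (r x)) ∧
      A ⊆ ⋃ x ∈ u, ball x (6 * r x) := by
  obtain ⟨u, huA, hdisj, hcov⟩ :=
    Vitali.exists_disjoint_subfamily_covering_enlargement_closedBall A id r R hrR 5 (by norm_num)
  refine ⟨u, huA, countable_of_pairwiseDisjoint_closedBall (μ := μ)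
    (fun x hx => hr x (huA hx)) hdisj, hdisj, fun x hx => ?_⟩
  obtain ⟨y, hy, hxy⟩ := hcov x hx
  have hry := hr y (huA hy)
  exact mem_biUnion hy <|
    closedBall_subset_ball (by linarith) (hxy (mem_closedBall_self (hr x hx).le))

lemma volume_closedBall_le (y : UnitAddCircle) (r : ℝ) :
    volume (closedBall y r) ≤ ENNReal.ofReal (2 * r) := by
  rw [AddCircle.volume_closedBall]
  exact ENNReal.ofReal_le_ofReal (min_le_right _ _)

lemma codimHPre_preimage_inter_le_tsum_indicator [Nonempty T] {f : T → UnitAddCircle} {A : Set T}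
    {δ : ℝ} (hδ : 0 ≤ δ) {ι : Type*} [Countable ι] {x : ι → T} {s : ι → ℝ} (hs : ∀ i, s i ≤ δ)
    (hA : A ⊆ ⋃ i, ball (x i) (s i)) {S : ι → Set UnitAddCircle}
    (hf : ∀ i, MapsTo f (ball (x i) (s i)) (S i)) (t : UnitAddCircle) :
    codimHPre μ δ (f ⁻¹' {t} ∩ A) ≤
      ∑' i, (S i).indicator (fun _ => μ (ball (x i) (s i)) / ENNReal.ofReal (s i)) t := by
  classical
  let s' : ι → ℝ := fun i => if t ∈ S i then s i else 0
  have hs' : ∀ i, s' i ≤ δ := fun i => by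
    dsimp only [s']
    split_ifs
    exacts [hs i, hδ]
  have hcov : f ⁻¹' {t} ∩ A ⊆ ⋃ i, ball (x i) (s' i) := by
    rintro y ⟨rfl, hy⟩
    obtain ⟨i, hi⟩ := mem_iUnion.1 (hA hy)
    exact mem_iUnion.2 ⟨i, by rwa [show s' i = s i from if_pos (hf i hi)]⟩
  refine (codimHPre_le_tsum μ hδ hs' hcov).trans_eq (tsum_congr fun i => ?_)
  by_cases ht : t ∈ S i <;> simp [s', ht]

lemma upperLintegral_codimHPre_le_tsum [Nonempty T] {f : T → UnitAddCircle} {A : Set T} {M : ℝ≥0}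
    {δ : ℝ} (hδ : 0 ≤ δ) {ι : Type*} [Countable ι] {x : ι → T} {s : ι → ℝ} (hs0 : ∀ i, 0 < s i)
    (hs : ∀ i, s i ≤ δ) (hA : A ⊆ ⋃ i, ball (x i) (s i))
    (hf : ∀ i, MapsTo f (ball (x i) (s i)) (closedBall (f (x i)) (M * s i))) :
    upperLintegral volume (fun t => codimHPre μ δ (f ⁻¹' {t} ∩ A)) ≤
      2 * M * ∑' i, μ (ball (x i) (s i)) := by
  let a : ι → ℝ≥0∞ := fun i => μ (ball (x i) (s i)) / ENNReal.ofReal (s i)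
  have hmeas : ∀ i, Measurable ((closedBall (f (x i)) (M * s i)).indicator fun _ => a i) :=
    fun i => measurable_const.indicator measurableSet_closedBall
  have hterm : ∀ i, a i * volume (closedBall (f (x i)) (M * s i)) ≤
      2 * M * μ (ball (x i) (s i)) := fun i =>
    calc a i * volume (closedBall (f (x i)) (M * s i))
        ≤ a i * ENNReal.ofReal (s i * (2 * M : ℝ≥0)) := by
          gcongr
          refine (volume_closedBall_le _ _).trans_eq (congrArg _ ?_)
          push_cast
          ring
      _ = a i * ENNReal.ofReal (s i) * (2 * M) := by
          rw [ENNReal.ofReal_mul (hs0 i).le, ENNReal.ofReal_coe_nnreal, ← mul_assoc]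
          push_cast
          rfl
      _ = 2 * M * μ (ball (x i) (s i)) := by
          rw [ENNReal.div_mul_cancel (by simpa using hs0 i) ENNReal.ofReal_ne_top, mul_comm]
  calc upperLintegral volume (fun t => codimHPre μ δ (f ⁻¹' {t} ∩ A))
      ≤ ∫⁻ t, ∑' i, (closedBall (f (x i)) (M * s i)).indicator (fun _ => a i) t :=
        upperLintegral_le_lintegral (Measurable.tsum hmeas)
          (codimHPre_preimage_inter_le_tsum_indicator hδ hs hA hf)
    _ = ∑' i, a i * volume (closedBall (f (x i)) (M * s i)) := by
        rw [lintegral_tsum fun i => (hmeas i).aemeasurable]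
        exact tsum_congr fun i => lintegral_indicator_const measurableSet_closedBall _
    _ ≤ 2 * M * ∑' i, μ (ball (x i) (s i)) := by
        rw [← ENNReal.tsum_mul_left]
        exact ENNReal.tsum_le_tsum hterm

variable [BorelSpace T] [Nonempty T] [IsFiniteMeasure μ] [μ.IsOpenPosMeasure] {c : ℝ≥0}

lemma IsGloballyDoubling.upperLintegral_codimHPre_le_measure_isOpen (hc : IsGloballyDoubling μ c)
    {f : T → UnitAddCircle} {A U : Set T} {M : ℝ≥0} (hA : ∀ x ∈ A, pLip f x < M) (hU : IsOpen U)
    (hAU : A ⊆ U) {δ : ℝ} (hδ : 0 < δ) :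
    upperLintegral volume (fun t => codimHPre μ δ (f ⁻¹' {t} ∩ A)) ≤
      (2 * c ^ 3 : ℝ≥0) * (M * μ U) := by
  have hr : ∀ x ∈ A, ∃ r : ℝ, 0 < r ∧ 6 * r ≤ δ ∧ closedBall x r ⊆ U ∧
      MapsTo f (ball x (6 * r)) (closedBall (f x) (M * (6 * r))) := by
    intro x hx
    obtain ⟨R, hR, hRU⟩ := nhds_basis_closedBall.mem_iff.1 (hU.mem_nhds (hAU hx))
    obtain ⟨s, hmap, hs0, hs⟩ := ((eventually_mapsTo_closedBall_of_pLip_lt (hA x hx)).and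
      (Ioo_mem_nhdsGT (lt_min hδ hR) : ∀ᶠ s in 𝓝[>] (0 : ℝ), s ∈ Ioo 0 (min δ R))).exists
    have hsδ := hs.trans_le (min_le_left _ _)
    have hsR := hs.trans_le (min_le_right _ _)
    refine ⟨s / 6, by positivity, by linarith, ?_, by rwa [mul_div_cancel₀ s (by norm_num)]⟩
    exact (closedBall_subset_closedBall (by linarith)).trans hRU
  choose! r hr0 hrδ hrU hmap using hr
  obtain ⟨u, huA, hu, hdisj, hcov⟩ := exists_disjoint_closedBall_cover (μ := μ) hr0
    (R := δ) fun x hx => by linarith [hr0 x hx, hrδ x hx]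
  have := hu.to_subtype
  have hr0' : ∀ x : u, 0 < r x := fun x => hr0 x (huA x.2)
  calc upperLintegral volume (fun t => codimHPre μ δ (f ⁻¹' {t} ∩ A))
      ≤ 2 * M * ∑' x : u, μ (ball (x : T) (6 * r x)) :=
        upperLintegral_codimHPre_le_tsum hδ.le (fun x => by linarith [hr0' x])
          (fun x => hrδ x (huA x.2)) (by rwa [iUnion_subtype]) fun x => hmap x (huA x.2)
    _ ≤ 2 * M * ∑' x : u, (c ^ 3 : ℝ≥0) * μ (closedBall (x : T) (r x)) := by
        gcongr with x
        exact hc.measure_ball_six_mul_le x (hr0' x)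
    _ = (2 * c ^ 3 : ℝ≥0) * (M * μ (⋃ x : u, closedBall (x : T) (r x))) := by
        rw [measure_iUnion hdisj.subtype fun _ => measurableSet_closedBall, ENNReal.tsum_mul_left]
        push_cast
        ring
    _ ≤ (2 * c ^ 3 : ℝ≥0) * (M * μ U) := by
        gcongr
        exact iUnion_subset fun x => hrU x (huA x.2)

lemma IsGloballyDoubling.levelSetOuterMeasure_le_of_pLip_lt (hc : IsGloballyDoubling μ c)
    {f : T → UnitAddCircle} {A : Set T} {M : ℝ≥0} (hA : ∀ x ∈ A, pLip f x < M) :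
    levelSetOuterMeasure volume μ f A ≤ (2 * c ^ 3 : ℝ≥0) * (M * μ A) := by
  simp only [levelSetOuterMeasure_apply, codimH_eq_iSup_codimHPre]
  refine upperLintegral_iSup_le (F := fun n t => codimHPre μ (1 / (n + 1)) (f ⁻¹' {t} ∩ A))
    (fun m n hmn t => codimHPre_anti μ (Nat.one_div_le_one_div hmn) _) fun n => ?_
  rw [← mul_assoc, ← ENNReal.coe_mul]
  refine le_mul_of_forall_pos_le_mul_add ENNReal.one_ne_top fun ε hε => ?_
  obtain ⟨U, hAU, hU, hμU⟩ := A.exists_isOpen_le_add μ (ENNReal.coe_ne_zero.2 hε.ne')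
  refine (hc.upperLintegral_codimHPre_le_measure_isOpen hA hU hAU
    Nat.one_div_pos_of_nat).trans ?_
  rw [← mul_assoc, ← ENNReal.coe_mul, mul_one]
  gcongr

lemma IsGloballyDoubling.levelSetOuterMeasure_eq_zero (hc : IsGloballyDoubling μ c)
    {f : T → UnitAddCircle} {L : ℝ≥0} (hf : LipschitzWith L f) {N : Set T} (hN : μ N = 0) :
    levelSetOuterMeasure volume μ f N = 0 := by
  have hle := hc.levelSetOuterMeasure_le_of_pLip_lt (A := N) (M := L + 1) fun x _ =>
    (pLip_le_of_lipschitzWith hf x).trans_lt (ENNReal.coe_lt_coe.2 (lt_add_one L))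
  simpa [hN] using hle

end Eilenberg

section Layering

lemma exists_nat_mem_Ico_mul {a : ℝ≥0∞} (ha : a < ⊤) {η : ℝ≥0} (hη : 0 < η) :
    ∃ n : ℕ, a ∈ Ico (((n * η : ℝ≥0)) : ℝ≥0∞) (((n + 1 : ℕ) * η : ℝ≥0)) := by
  lift a to ℝ≥0 using ha.ne
  refine ⟨⌊a / η⌋₊, ENNReal.coe_le_coe.2 ?_, ENNReal.coe_lt_coe.2 ?_⟩
  · exact (le_div_iff₀ hη).1 (Nat.floor_le zero_le)
  · exact (div_lt_iff₀ hη).1 (by push_cast; exact Nat.lt_floor_add_one _)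

variable {X : Type*} [MeasurableSpace X] {μ : Measure X} {m : OuterMeasure X} {C : ℝ≥0}
  {v w : X → ℝ≥0∞} {A : Set X}

lemma le_mul_lintegral_add_of_le_mul_measure (hnull : ∀ N, μ N = 0 → m N = 0)
    (hm : ∀ (M : ℝ≥0) (A : Set X), (∀ x ∈ A, v x < M) → m A ≤ C * (M * μ A))
    (hw : Measurable w) (hwtop : ∀ᵐ x ∂μ, w x < ⊤) (hvw : ∀ᵐ x ∂μ, v x ≤ w x)
    (hA : MeasurableSet A) {η : ℝ≥0} (hη : 0 < η) :
    m A ≤ C * ∫⁻ x in A, (w x + η) ∂μ := by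
  let N : Set X := {x | v x ≤ w x ∧ w x < ⊤}ᶜ
  let J : ℕ → Set ℝ≥0∞ := fun n => Ico (n * η : ℝ≥0) ((n + 1 : ℕ) * η : ℝ≥0)
  let B : ℕ → Set X := fun n => A ∩ w ⁻¹' J n
  have hJ : Pairwise (Function.onFun Disjoint J) :=
    Monotone.pairwise_disjoint_on_Ico_succ (f := fun n : ℕ => ((n * η : ℝ≥0) : ℝ≥0∞))
      fun i j hij => by dsimp only; gcongr
  have hB : ∀ n, MeasurableSet (B n) := fun n => hA.inter (hw measurableSet_Ico)
  have hBdisj : Pairwise (Function.onFun Disjoint B) := fun i j hij =>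
    ((hJ hij).preimage w).mono inter_subset_right inter_subset_right
  have hcov : A ⊆ N ∪ ⋃ n, B n \ N := by
    intro x hx
    by_cases hxN : x ∈ N
    · exact Or.inl hxN
    · obtain ⟨n, hn⟩ := exists_nat_mem_Ico_mul (not_not.1 hxN).2 hη
      exact Or.inr (mem_iUnion.2 ⟨n, ⟨hx, hn⟩, hxN⟩)
  have hpiece : ∀ n, m (B n \ N) ≤ C * ∫⁻ x in B n, (w x + η) ∂μ := by
    intro n
    calc m (B n \ N) ≤ C * (((n + 1 : ℕ) * η : ℝ≥0) * μ (B n \ N)) :=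
          hm _ _ fun x hx => (not_not.1 hx.2).1.trans_lt hx.1.2.2
      _ ≤ C * (((n + 1 : ℕ) * η : ℝ≥0) * μ (B n)) := by gcongr; exact sdiff_subset
      _ = C * ∫⁻ _ in B n, ((n + 1 : ℕ) * η : ℝ≥0) ∂μ := by rw [setLIntegral_const]
      _ ≤ C * ∫⁻ x in B n, (w x + η) ∂μ := by
          refine mul_le_mul_right (setLIntegral_mono' (hB n) fun x hx => ?_) _
          rw [Nat.cast_succ, add_one_mul, ENNReal.coe_add]
          gcongr
          exact hx.2.1
  calc m A ≤ m N + ∑' n, m (B n \ N) := (m.mono hcov).trans <|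
        (measure_union_le _ _).trans (add_le_add le_rfl (measure_iUnion_le _))
    _ = ∑' n, m (B n \ N) := by rw [hnull N (hvw.and hwtop), zero_add]
    _ ≤ ∑' n, C * ∫⁻ x in B n, (w x + η) ∂μ := ENNReal.tsum_le_tsum hpiece
    _ = C * ∫⁻ x in ⋃ n, B n, (w x + η) ∂μ := by
        rw [ENNReal.tsum_mul_left, lintegral_iUnion hB hBdisj]
    _ ≤ C * ∫⁻ x in A, (w x + η) ∂μ := by
        gcongr
        exact iUnion_subset fun n => inter_subset_left

lemma le_mul_lintegral_of_le_mul_measure [IsFiniteMeasure μ] (hnull : ∀ N, μ N = 0 → m N = 0)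
    (hm : ∀ (M : ℝ≥0) (A : Set X), (∀ x ∈ A, v x < M) → m A ≤ C * (M * μ A))
    (hw : Measurable w) (hwtop : ∀ᵐ x ∂μ, w x < ⊤) (hvw : ∀ᵐ x ∂μ, v x ≤ w x)
    (hA : MeasurableSet A) : m A ≤ C * ∫⁻ x in A, w x ∂μ := by
  refine le_mul_of_forall_pos_le_mul_add (measure_ne_top μ A) fun η hη => ?_
  refine (le_mul_lintegral_add_of_le_mul_measure hnull hm hw hwtop hvw hA hη).trans_eq ?_
  rw [lintegral_add_right _ measurable_const, setLIntegral_const]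

end Layering

section Averages

variable {X : Type*} [MeasurableSpace X] {μ : Measure X}

lemma enorm_average_sub_le_laverage_enorm_sub [IsFiniteMeasure μ] [NeZero μ] {u : X → ℝ}
    (hu : Integrable u μ) (a : ℝ) : ‖(⨍ x, u x ∂μ) - a‖ₑ ≤ ⨍⁻ x, ‖u x - a‖ₑ ∂μ := by
  have hsub : (⨍ x, u x ∂μ) - a = ⨍ x, (u x - a) ∂μ := by
    rw [average, average, integral_sub hu.to_average (integrable_const a), integral_const]
    simp
  rw [hsub]
  exact enorm_integral_le_lintegral_enorm _

lemma setLAverage_le_mul_setLAverage {A B : Set X} (hAB : A ⊆ B) {D : ℝ≥0∞}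
    (hD : μ B ≤ D * μ A) (hB : μ B ≠ ⊤) (f : X → ℝ≥0∞) :
    ⨍⁻ x in A, f x ∂μ ≤ D * ⨍⁻ x in B, f x ∂μ := by
  rcases eq_or_ne (μ A) 0 with hA | hA
  · simp [setLAverage_eq, Measure.restrict_eq_zero.2 hA]
  have hB0 : μ B ≠ 0 := fun h => hA (measure_mono_null hAB h)
  rw [setLAverage_eq, setLAverage_eq]
  refine ENNReal.div_le_of_le_mul ?_
  calc ∫⁻ x in A, f x ∂μ ≤ (∫⁻ x in B, f x ∂μ) / μ B * μ B := by
        rw [ENNReal.div_mul_cancel hB0 hB]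
        exact lintegral_mono_set hAB
    _ ≤ (∫⁻ x in B, f x ∂μ) / μ B * (D * μ A) := by gcongr
    _ = D * ((∫⁻ x in B, f x ∂μ) / μ B) * μ A := by ring

end Averages

section Telescoping

variable {T : Type*} [MetricSpace T] [MeasurableSpace T] {μ : Measure T} {CP lP : ℝ}
  {u : T → ℝ} {ρ : T → ℝ≥0∞}

lemma SupportsPoincare.setLAverage_enorm_sub_le (h : SupportsPoincare μ CP lP)
    (hu : LocallyIntegrable u μ) (hρ : Measurable ρ) (hg : IsUpperGradient u ρ) (z : T) {s : ℝ}
    (hs : 0 < s) :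
    ⨍⁻ y in ball z s, ‖u y - ⨍ w in ball z s, u w ∂μ‖ₑ ∂μ ≤
      ENNReal.ofReal (2 * CP.toNNReal * s) * ⨍⁻ y in ball z (lP * s), ρ y ∂μ := by
  have hdiam : CP * diam (ball z s) ≤ 2 * CP.toNNReal * s :=
    calc CP * diam (ball z s) ≤ CP.toNNReal * (2 * s) := by
          gcongr
          · exact Real.le_coe_toNNReal CP
          · exact diam_ball hs.le
      _ = 2 * CP.toNNReal * s := by ring
  simp only [setLAverage_eq, Real.enorm_eq_ofReal_abs]
  exact (h.2 u ρ hu hρ hg z s hs).trans (by gcongr)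

lemma SupportsPoincare.enorm_setAverage_ball_sub_le (h : SupportsPoincare μ CP lP)
    (hu : Integrable u μ) {z : T} {s : ℝ} (hs : 0 < s) (a : ℝ) :
    ‖(⨍ y in ball z s, u y ∂μ) - a‖ₑ ≤ ⨍⁻ y in ball z s, ‖u y - a‖ₑ ∂μ := by
  have : NeZero (μ.restrict (ball z s)) := ⟨by simpa using (h.1 z s hs).1.ne'⟩
  have : IsFiniteMeasure (μ.restrict (ball z s)) := ⟨by simpa using (h.1 z s hs).2⟩
  exact enorm_average_sub_le_laverage_enorm_sub hu.restrict a

lemma SupportsPoincare.abs_setAverage_sub_setAverage_le (h : SupportsPoincare μ CP lP)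
    (hu : Integrable u μ) (hρ : Measurable ρ) (hg : IsUpperGradient u ρ) {z z' : T} {s s' : ℝ}
    (hs : 0 < s) (hs' : 0 < s') (hsub : ball z' s' ⊆ ball z s) {D m : ℝ≥0}
    (hD : μ (ball z s) ≤ D * μ (ball z' s')) (hm : ⨍⁻ y in ball z (lP * s), ρ y ∂μ ≤ m) :
    |(⨍ y in ball z' s', u y ∂μ) - ⨍ y in ball z s, u y ∂μ| ≤
      2 * D * CP.toNNReal * m * s := by
  rw [← ENNReal.ofReal_le_ofReal_iff (by positivity), ← Real.enorm_eq_ofReal_abs]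
  calc ‖(⨍ y in ball z' s', u y ∂μ) - ⨍ y in ball z s, u y ∂μ‖ₑ
      ≤ ⨍⁻ y in ball z' s', ‖u y - ⨍ w in ball z s, u w ∂μ‖ₑ ∂μ :=
        h.enorm_setAverage_ball_sub_le hu hs' _
    _ ≤ D * ⨍⁻ y in ball z s, ‖u y - ⨍ w in ball z s, u w ∂μ‖ₑ ∂μ :=
        setLAverage_le_mul_setLAverage hsub hD (h.1 z s hs).2.ne _
    _ ≤ D * (ENNReal.ofReal (2 * CP.toNNReal * s) * m) := by
        gcongr
        exact (h.setLAverage_enorm_sub_le hu.locallyIntegrable hρ hg z hs).trans (by gcongr)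
    _ = ENNReal.ofReal (2 * D * CP.toNNReal * m * s) := by
        rw [← ENNReal.ofReal_coe_nnreal (p := D), ← ENNReal.ofReal_coe_nnreal (p := m),
          ← ENNReal.ofReal_mul (by positivity), ← ENNReal.ofReal_mul (by positivity)]
        ring_nf

lemma SupportsPoincare.abs_setAverage_sub_setAverage_two_pow_le (h : SupportsPoincare μ CP lP)
    {c : ℝ≥0} (hc : IsGloballyDoubling μ c) (hu : Integrable u μ) (hρ : Measurable ρ)
    (hg : IsUpperGradient u ρ) {z : T} {s : ℝ} (hs : 0 < s) {m : ℝ≥0} (n : ℕ)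
    (hm : ∀ t ∈ Icc s (2 ^ n * s), ⨍⁻ y in ball z (lP * t), ρ y ∂μ ≤ m) :
    |(⨍ y in ball z s, u y ∂μ) - ⨍ y in ball z (2 ^ n * s), u y ∂μ| ≤
      4 * c * CP.toNNReal * m * (2 ^ n * s) := by
  induction n with
  | zero =>
    rw [pow_zero, one_mul, sub_self, abs_zero]
    positivity
  | succ n ih =>
    have hs' : 0 < 2 ^ n * s := by positivity
    have hdouble : 2 ^ (n + 1) * s = 2 * (2 ^ n * s) := by ring
    have hle : s ≤ 2 ^ (n + 1) * s := le_mul_of_one_le_left hs.le (one_le_pow₀ one_le_two)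
    have hstep := h.abs_setAverage_sub_setAverage_le hu hρ hg (z := z) (z' := z)
      (s := 2 ^ (n + 1) * s) (by positivity) hs' (ball_subset_ball (by linarith))
      (by rw [hdouble]; exact hc z _ hs') (hm _ ⟨hle, le_rfl⟩)
    calc |(⨍ y in ball z s, u y ∂μ) - ⨍ y in ball z (2 ^ (n + 1) * s), u y ∂μ|
        ≤ 4 * c * CP.toNNReal * m * (2 ^ n * s) +
            2 * c * CP.toNNReal * m * (2 ^ (n + 1) * s) :=
          (abs_sub_le _ _ _).trans <|
            add_le_add (ih fun t ht => hm t ⟨ht.1, ht.2.trans (by linarith)⟩) hstep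
      _ = 4 * c * CP.toNNReal * m * (2 ^ (n + 1) * s) := by ring

lemma integrable_of_lipschitzWith [OpensMeasurableSpace T] [BoundedSpace T] [IsFiniteMeasure μ]
    {L : ℝ≥0} (hu : LipschitzWith L u) : Integrable u μ := by
  obtain ⟨C, hC⟩ := isBounded_iff_forall_norm_le.1
    (hu.isBounded_image (Bornology.IsBounded.all univ))
  exact .of_bound hu.continuous.aestronglyMeasurable C
    (.of_forall fun x => hC _ (mem_image_of_mem u (mem_univ x)))

variable [OpensMeasurableSpace T] [BoundedSpace T] [IsFiniteMeasure μ] {L : ℝ≥0}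

lemma SupportsPoincare.abs_setAverage_sub_le_of_lipschitzWith (h : SupportsPoincare μ CP lP)
    (hu : LipschitzWith L u) (z : T) {s : ℝ} (hs : 0 < s) :
    |(⨍ y in ball z s, u y ∂μ) - u z| ≤ L * s := by
  rw [← ENNReal.ofReal_le_ofReal_iff (by positivity), ← Real.enorm_eq_ofReal_abs]
  calc ‖(⨍ y in ball z s, u y ∂μ) - u z‖ₑ ≤ ⨍⁻ y in ball z s, ‖u y - u z‖ₑ ∂μ :=
        h.enorm_setAverage_ball_sub_le (integrable_of_lipschitzWith hu) hs _
    _ ≤ (∫⁻ _ in ball z s, ENNReal.ofReal (L * s) ∂μ) / μ (ball z s) := by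
        rw [setLAverage_eq]
        gcongr ?_ / _
        refine setLIntegral_mono measurable_const fun y hy => ?_
        rw [Real.enorm_eq_ofReal_abs, ← Real.dist_eq]
        exact ENNReal.ofReal_le_ofReal
          ((hu.dist_le_mul y z).trans (by gcongr; exact (mem_ball.1 hy).le))
    _ = ENNReal.ofReal (L * s) := by
        rw [setLIntegral_const, ENNReal.mul_div_cancel_right (h.1 z s hs).1.ne' (h.1 z s hs).2.ne]

/-- The constant of the pointwise bound `pLip f ≤ cheegerConst c P * ρ` for doubling constant `c`
and Poincaré constant `P`. The first summand absorbs the Lipschitz error at the smallest scale of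
the telescoping argument. -/
def cheegerConst (c P : ℝ≥0) : ℝ≥0 := 1 + (12 * c + 4 * c ^ 2) * P * c

lemma SupportsPoincare.abs_sub_le_of_lipschitzWith (h : SupportsPoincare μ CP lP) {c : ℝ≥0}
    (hc : IsGloballyDoubling μ c) (hu : LipschitzWith L u) (hρ : Measurable ρ)
    (hg : IsUpperGradient u ρ) {x y : T} {s : ℝ} (hs : 0 < s) {m : ℝ≥0} (N : ℕ)
    (hy : y ∈ ball x (2 ^ N * s))
    (hm : ∀ z ∈ ball x (2 ^ N * s), ∀ t ∈ Icc s (2 ^ (N + 1) * s),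
      ⨍⁻ w in ball z (lP * t), ρ w ∂μ ≤ m) :
    |u y - u x| ≤ 2 * L * s + (12 * c + 4 * c ^ 2) * CP.toNNReal * m * (2 ^ N * s) := by
  have hint : Integrable u μ := integrable_of_lipschitzWith hu
  have hR : 0 < 2 ^ N * s := by positivity
  have hdouble : 2 ^ (N + 1) * s = 2 * (2 ^ N * s) := by ring
  have hyx : dist y x < 2 ^ N * s := hy
  have hle : s ≤ 2 ^ (N + 1) * s := le_mul_of_one_le_left hs.le (one_le_pow₀ one_le_two)
  have hx1 := h.abs_setAverage_sub_le_of_lipschitzWith hu x hs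
  have hy1 := h.abs_setAverage_sub_le_of_lipschitzWith hu y hs
  have hx2 := h.abs_setAverage_sub_setAverage_two_pow_le hc hint hρ hg hs N
    fun t ht => hm x (mem_ball_self hR) t ⟨ht.1, ht.2.trans (by linarith)⟩
  have hy2 := h.abs_setAverage_sub_setAverage_two_pow_le hc hint hρ hg hs (N + 1) (hm y hy)
  have hvol : μ (ball y (2 ^ (N + 1) * s)) ≤ (c ^ 2 : ℝ≥0) * μ (ball x (2 ^ N * s)) :=
    (measure_mono (ball_subset_ball' (by linarith))).trans
      (hc.measure_ball_two_pow_mul_le x hR 2)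
  have hxy := h.abs_setAverage_sub_setAverage_le hint hρ hg (z' := x) (z := y) (by positivity) hR
    (ball_subset_ball' (by rw [dist_comm]; linarith)) hvol (hm y hy _ ⟨hle, le_rfl⟩)
  rw [hdouble] at hy2 hxy
  push_cast at hxy
  rw [abs_le] at *
  constructor <;> linarith

end Telescoping

section Lebesgue

variable {T : Type*} [MetricSpace T] [MeasurableSpace T] [BorelSpace T]
  [SecondCountableTopology T] {μ : Measure T} [IsFiniteMeasure μ] {c : ℝ≥0} {ρ : T → ℝ≥0∞}

/-- The balls need not be centred at `x`, only to have radius comparable to their distance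
from `x`. -/
lemma IsGloballyDoubling.ae_eventually_setLAverage_ball_le (hc : IsGloballyDoubling μ c)
    (hρ : Measurable ρ) (hfin : ∫⁻ x, ρ x ∂μ ≠ ⊤) :
    ∀ᵐ x ∂μ, ∀ a > (0 : ℝ), ∀ (b : ℝ) (η : ℝ≥0), 0 < η →
      ∀ᶠ r in 𝓝[>] (0 : ℝ), ∀ z ∈ ball x r, ∀ s ∈ Icc (a * r) (b * r),
        ⨍⁻ y in ball z s, ρ y ∂μ ≤ c * (ρ x + η) := by
  have := hc.isUnifLocDoublingMeasure
  have hlim : ∀ᵐ x ∂μ, ∀ K : ℕ, Tendsto (fun A => (∫⁻ y in A, ρ y ∂μ) / μ A)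
      ((IsUnifLocDoublingMeasure.vitaliFamily μ (K : ℝ)).filterAt x) (𝓝 (ρ x)) :=
    ae_all_iff.2 fun K => VitaliFamily.ae_tendsto_lintegral_div _ hρ.aemeasurable hfin
  filter_upwards [hlim, ae_lt_top hρ hfin] with x hx hxtop a ha b η hη
  obtain ⟨K, hK⟩ := exists_nat_ge (1 / a)
  rw [div_le_iff₀ ha] at hK
  have hlt : ρ x < ρ x + η := ENNReal.lt_add_right hxtop.ne (ENNReal.coe_ne_zero.2 hη.ne')
  obtain ⟨ε, hε, havg⟩ :=
    (VitaliFamily.eventually_filterAt_iff _).1 ((hx K).eventually_lt_const hlt)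
  have hsmall : ∀ᶠ r in 𝓝[>] (0 : ℝ), (b + 1) * r < ε :=
    (Continuous.tendsto' (by fun_prop) 0 0 (mul_zero _)).eventually_lt_const hε |>.filter_mono
      nhdsWithin_le_nhds
  filter_upwards [hsmall, self_mem_nhdsWithin] with r hr hr0 z hz s hs
  have hr0 : 0 < r := hr0
  have hs0 : 0 < s := (mul_pos ha hr0).trans_le hs.1
  have hzx : dist z x < r := hz
  have hxz : dist x z ≤ K * s :=
    calc dist x z ≤ 1 * r := by rw [dist_comm]; linarith
      _ ≤ K * a * r := by gcongr
      _ = K * (a * r) := mul_assoc _ _ _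
      _ ≤ K * s := by gcongr; exact hs.1
  have hvol : μ (closedBall z s) ≤ c * μ (ball z s) :=
    (measure_mono (closedBall_subset_ball (by linarith))).trans (hc z s hs0)
  refine (setLAverage_le_mul_setLAverage ball_subset_closedBall hvol
    (measure_ne_top _ _) ρ).trans ?_
  rw [setLAverage_eq]
  gcongr
  exact (havg _ (IsUnifLocDoublingMeasure.closedBall_mem_vitaliFamily_of_dist_le_mul μ hxz hs0)
    (closedBall_subset_closedBall' (by linarith [hs.2]))).le

lemma IsGloballyDoubling.ae_eventually_setLAverage_ball_mul_le (hc : IsGloballyDoubling μ c)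
    (hρ : Measurable ρ) (hfin : ∫⁻ x, ρ x ∂μ ≠ ⊤) (l : ℝ) :
    ∀ᵐ x ∂μ, ∀ a > (0 : ℝ), ∀ (b : ℝ) (η : ℝ≥0), 0 < η →
      ∀ᶠ r in 𝓝[>] (0 : ℝ), ∀ z ∈ ball x r, ∀ s ∈ Icc (a * r) (b * r),
        ⨍⁻ y in ball z (l * s), ρ y ∂μ ≤ c * (ρ x + η) := by
  filter_upwards [hc.ae_eventually_setLAverage_ball_le hρ hfin] with x hx a ha b η hη
  rcases le_or_gt l 0 with hl | hl
  · filter_upwards [self_mem_nhdsWithin] with r hr z _ s hs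
    have hs0 : 0 ≤ s := (mul_pos ha hr).le.trans hs.1
    simp [ball_eq_empty.2 (mul_nonpos_of_nonpos_of_nonneg hl hs0)]
  · filter_upwards [hx (l * a) (by positivity) (l * b) η hη] with r hr z hz s hs
    refine hr z hz (l * s) ⟨?_, ?_⟩
    · rw [mul_assoc]
      gcongr
      exact hs.1
    · rw [mul_assoc]
      gcongr
      exact hs.2

end Lebesgue

section Cheeger

lemma IsUpperGradient.comp_lipschitzWith_one {X Y Z : Type*} [PseudoMetricSpace X]
    [PseudoEMetricSpace Y] [PseudoEMetricSpace Z] {f : X → Y} {ρ : X → ℝ≥0∞}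
    (hg : IsUpperGradient f ρ) {g : Y → Z} (h1 : LipschitzWith 1 g) :
    IsUpperGradient (g ∘ f) ρ :=
  fun γ => (h1 _ _).trans (by simpa using hg γ)

variable {T : Type*} [MetricSpace T] [MeasurableSpace T] [BorelSpace T] [BoundedSpace T]
  [SecondCountableTopology T] {μ : Measure T} [IsFiniteMeasure μ] {CP lP : ℝ}

/-- The hard half of Cheeger's theorem `ρ_f ≃ Lip f`. -/
lemma SupportsPoincare.ae_pLip_le (h : SupportsPoincare μ CP lP) {c : ℝ≥0}
    (hc : IsGloballyDoubling μ c) {f : T → UnitAddCircle} {L : ℝ≥0} (hf : LipschitzWith L f)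
    {ρ : T → ℝ≥0∞} (hρ : Measurable ρ) (hg : IsUpperGradient f ρ) (hfin : ∫⁻ x, ρ x ∂μ ≠ ⊤) :
    ∀ᵐ x ∂μ, pLip f x ≤ cheegerConst c CP.toNNReal * ρ x := by
  filter_upwards [hc.ae_eventually_setLAverage_ball_mul_le hρ hfin lP, ae_lt_top hρ hfin]
    with x hx hxtop
  refine le_mul_of_forall_pos_le_mul_add ENNReal.one_ne_top fun η hη => ?_
  lift ρ x to ℝ≥0 using hxtop.ne with a
  rw [mul_one]
  norm_cast
  refine pLip_le_of_eventually_mapsTo_closedBall ?_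
  obtain ⟨N, hN⟩ : ∃ N : ℕ, 2 * (L : ℝ) / η < 2 ^ N := pow_unbounded_of_one_lt _ one_lt_two
  rw [div_lt_iff₀ (by exact_mod_cast hη)] at hN
  filter_upwards [hx (1 / 2 ^ N) (by positivity) 2 η hη, self_mem_nhdsWithin] with r hr hr0 y hy
  have hr0 : 0 < r := hr0
  obtain ⟨s, rfl⟩ : ∃ s, r = 2 ^ N * s := ⟨r / 2 ^ N, by field_simp⟩
  have hs : 0 < s := pos_of_mul_pos_right hr0 (by positivity)
  have hosc := h.abs_sub_le_of_lipschitzWith hc ((LipschitzWith.dist_left (f x)).comp hf) hρ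
    (hg.comp_lipschitzWith_one (LipschitzWith.dist_left (f x))) (m := c * (a + η)) hs N hy
    fun z hz t ht => by
      push_cast
      refine hr z hz t ⟨?_, ?_⟩
      · exact le_trans (by field_simp; rfl) ht.1
      · exact ht.2.trans_eq (by ring)
  simp only [Function.comp_apply, dist_self, sub_zero, abs_of_nonneg dist_nonneg] at hosc
  refine mem_closedBall.2 (hosc.trans ?_)
  have hsmall : 2 * L * s ≤ η * (2 ^ N * s) :=
    calc 2 * L * s ≤ 2 ^ N * η * s := by gcongr
      _ = η * (2 ^ N * s) := by ring
  have ha : 0 ≤ a * (2 ^ N * s) := by positivity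
  simp only [cheegerConst]
  push_cast
  linarith

end Cheeger

section DyadicLayers

variable {F : ℝ → ℝ≥0∞}

lemma volume_Ioc_two_zpow (k : ℤ) :
    volume (Ioc ((2 : ℝ) ^ k) (2 ^ (k + 1))) = ENNReal.ofReal (2 ^ k) := by
  rw [Real.volume_Ioc, zpow_add_one₀ two_ne_zero]
  congr 1
  ring

lemma lintegral_Ioi_eq_tsum_two_zpow (F : ℝ → ℝ≥0∞) :
    ∫⁻ s in Ioi 0, F s = ∑' k : ℤ, ∫⁻ s in Ioc ((2 : ℝ) ^ k) (2 ^ (k + 1)), F s := by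
  have hdisj : Pairwise (Function.onFun Disjoint fun k : ℤ => Ioc ((2 : ℝ) ^ k) (2 ^ (k + 1))) :=
    (zpow_right_mono₀ one_le_two).pairwise_disjoint_on_Ioc_succ
  have hunion : ⋃ k : ℤ, Ioc ((2 : ℝ) ^ k) (2 ^ (k + 1)) = Ioi 0 := by
    ext s
    refine ⟨fun hs => ?_, fun hs => mem_iUnion.2 (exists_mem_Ioc_zpow hs one_lt_two)⟩
    obtain ⟨k, hk⟩ := mem_iUnion.1 hs
    exact (zpow_pos two_pos k).trans hk.1
  rw [← hunion, lintegral_iUnion (fun _ => measurableSet_Ioc) hdisj]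

lemma lintegral_Ioi_le_tsum_two_zpow (hF : Antitone F) :
    ∫⁻ s in Ioi 0, F s ≤ ∑' k : ℤ, ENNReal.ofReal (2 ^ k) * F (2 ^ k) := by
  rw [lintegral_Ioi_eq_tsum_two_zpow]
  refine ENNReal.tsum_le_tsum fun k => ?_
  rw [← volume_Ioc_two_zpow, mul_comm, ← setLIntegral_const]
  exact setLIntegral_mono measurable_const fun s hs => hF hs.1.le

lemma tsum_two_zpow_le_lintegral_Ioi (hF : Antitone F) :
    ∑' k : ℤ, ENNReal.ofReal (2 ^ k) * F (2 ^ k) ≤ 2 * ∫⁻ s in Ioi 0, F s := by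
  have hsucc (k : ℤ) : ENNReal.ofReal (2 ^ (k + 1)) = 2 * ENNReal.ofReal (2 ^ k) := by
    rw [zpow_add_one₀ two_ne_zero, mul_comm, ENNReal.ofReal_mul zero_le_two, ENNReal.ofReal_ofNat]
  rw [← (Equiv.addRight (1 : ℤ)).tsum_eq, lintegral_Ioi_eq_tsum_two_zpow, ← ENNReal.tsum_mul_left]
  refine ENNReal.tsum_le_tsum fun k => ?_
  rw [Equiv.coe_addRight, hsucc, mul_assoc, ← volume_Ioc_two_zpow, mul_comm (volume _),
    ← setLIntegral_const]
  exact mul_le_mul_right (setLIntegral_mono' measurableSet_Ioc fun s hs => hF hs.2) _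

lemma volume_setOf_ofReal_lt_inter_Ioi_le (a : ℝ≥0∞) :
    volume ({s : ℝ | ENNReal.ofReal s < a} ∩ Ioi 0) ≤ a := by
  rcases eq_or_ne a ⊤ with rfl | ha
  · exact le_top
  calc volume ({s : ℝ | ENNReal.ofReal s < a} ∩ Ioi 0) ≤ volume (Ioo 0 a.toReal) :=
        measure_mono fun s hs => ⟨hs.2, (ENNReal.ofReal_lt_iff_lt_toReal (le_of_lt hs.2) ha).1 hs.1⟩
    _ = a := by rw [Real.volume_Ioo, sub_zero, ENNReal.ofReal_toReal ha]

lemma tsum_two_zpow_mul_ite_le (a b : ℝ≥0∞) :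
    ∑' k : ℤ, ENNReal.ofReal (2 ^ k) * (if ENNReal.ofReal (2 ^ k) < a then b else 0) ≤
      2 * (a * b) := by
  let E : Set ℝ := {s | ENNReal.ofReal s < a}
  have hE : MeasurableSet E := measurableSet_lt ENNReal.measurable_ofReal measurable_const
  have hanti : Antitone (E.indicator fun _ => b) := by
    intro s t hst
    by_cases ht : t ∈ E
    · have hs : s ∈ E := (ENNReal.ofReal_le_ofReal hst).trans_lt ht
      simp only [indicator_of_mem hs, indicator_of_mem ht, le_refl]
    · simp only [indicator_of_notMem ht, zero_le]
  calc ∑' k : ℤ, ENNReal.ofReal (2 ^ k) * (if ENNReal.ofReal (2 ^ k) < a then b else 0)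
      = ∑' k : ℤ, ENNReal.ofReal (2 ^ k) * E.indicator (fun _ => b) (2 ^ k) := by
        simp only [E, indicator_apply, mem_ofPred_eq]
    _ ≤ 2 * ∫⁻ s in Ioi 0, E.indicator (fun _ => b) s := tsum_two_zpow_le_lintegral_Ioi hanti
    _ = 2 * (volume (E ∩ Ioi 0) * b) := by
        rw [lintegral_indicator_const hE, Measure.restrict_apply hE, mul_comm b]
    _ ≤ 2 * (a * b) := by
        gcongr
        exact volume_setOf_ofReal_lt_inter_Ioi_le a

lemma tsum_two_zpow_mul_setLIntegral_le {X : Type*} [MeasurableSpace X] {ν : Measure X}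
    {g ρ : X → ℝ≥0∞} (hg : Measurable g) (hρ : Measurable ρ) :
    ∑' k : ℤ, ENNReal.ofReal (2 ^ k) * ∫⁻ x in {x | ENNReal.ofReal (2 ^ k) < g x}, ρ x ∂ν ≤
      2 * ∫⁻ x, g x * ρ x ∂ν := by
  have hA (k : ℤ) : MeasurableSet {x | ENNReal.ofReal (2 ^ k) < g x} :=
    measurableSet_lt measurable_const hg
  calc ∑' k : ℤ, ENNReal.ofReal (2 ^ k) * ∫⁻ x in {x | ENNReal.ofReal (2 ^ k) < g x}, ρ x ∂ν
      = ∫⁻ x, ∑' k : ℤ, ENNReal.ofReal (2 ^ k) *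
          {x | ENNReal.ofReal (2 ^ k) < g x}.indicator ρ x ∂ν := by
        rw [lintegral_tsum fun k => ((hρ.indicator (hA k)).const_mul _).aemeasurable]
        refine tsum_congr fun k => ?_
        rw [lintegral_const_mul _ (hρ.indicator (hA k)), lintegral_indicator (hA k)]
    _ ≤ ∫⁻ x, 2 * (g x * ρ x) ∂ν := by
        refine lintegral_mono fun x => ?_
        simpa [indicator_apply] using tsum_two_zpow_mul_ite_le (g x) (ρ x)
    _ = _ := lintegral_const_mul _ (hg.mul hρ)

end DyadicLayers

section Coarea

variable {T : Type*} [MetricSpace T] [MeasurableSpace T] {μ : Measure T}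

lemma choquetIntegral_le_tsum (μ : Measure T) (S : Set T) (g : T → ℝ≥0∞) :
    choquetIntegral μ S g ≤ ∑' k : ℤ, ENNReal.ofReal (2 ^ k) *
      codimH μ (S ∩ {x | ENNReal.ofReal (2 ^ k) < g x}) :=
  lintegral_Ioi_le_tsum_two_zpow fun _ _ hst => codimH_mono μ fun _ hx =>
    ⟨hx.1, (ENNReal.ofReal_le_ofReal hst).trans_lt hx.2⟩

/-- The constant in the coarea inequality: enlarging the disjoint balls of a Vitali cover costs
`c ^ 3`, and `f` maps a ball of radius `s` into an interval of length `2 * pLip f * s`. -/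
def coareaConst (c P : ℝ≥0) : ℝ≥0 := 2 * c ^ 3 * cheegerConst c P

variable [BorelSpace T] [BoundedSpace T] [Nonempty T] {CP lP : ℝ} {c : ℝ≥0}
  {f : T → UnitAddCircle} {L : ℝ≥0} {ρ : T → ℝ≥0∞}

lemma SupportsPoincare.levelSetOuterMeasure_le (h : SupportsPoincare μ CP lP)
    (hc : IsGloballyDoubling μ c) (hf : LipschitzWith L f) (hρ : Measurable ρ)
    (hg : IsUpperGradient f ρ) (hfin : ∫⁻ x, ρ x ∂μ ≠ ⊤) {A : Set T} (hA : MeasurableSet A) :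
    levelSetOuterMeasure volume μ f A ≤ coareaConst c CP.toNNReal * ∫⁻ x in A, ρ x ∂μ := by
  have := h.isFiniteMeasure
  have := h.isOpenPosMeasure
  have := secondCountableTopology_of_isOpenPosMeasure μ
  set K := cheegerConst c CP.toNNReal
  calc levelSetOuterMeasure volume μ f A
      ≤ (2 * c ^ 3 : ℝ≥0) * ∫⁻ x in A, K * ρ x ∂μ :=
        le_mul_lintegral_of_le_mul_measure (fun _ => hc.levelSetOuterMeasure_eq_zero hf)
          (fun _ _ => hc.levelSetOuterMeasure_le_of_pLip_lt) (hρ.const_mul _)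
          ((ae_lt_top hρ hfin).mono fun _ => ENNReal.mul_lt_top ENNReal.coe_lt_top)
          (h.ae_pLip_le hc hf hρ hg hfin) hA
    _ = _ := by rw [lintegral_const_mul _ hρ, ← mul_assoc, ← ENNReal.coe_mul, coareaConst]

lemma SupportsPoincare.upperLintegral_choquetIntegral_le (h : SupportsPoincare μ CP lP)
    (hc : IsGloballyDoubling μ c) (hf : LipschitzWith L f) (hρ : Measurable ρ)
    (hug : IsUpperGradient f ρ) (hfin : ∫⁻ x, ρ x ∂μ ≠ ⊤) {g : T → ℝ≥0∞} (hg : Measurable g) :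
    upperLintegral volume (fun t => choquetIntegral μ (f ⁻¹' {t}) g) ≤
      2 * coareaConst c CP.toNNReal * ∫⁻ x, g x * ρ x ∂μ := by
  set K := coareaConst c CP.toNNReal
  let A (k : ℤ) : Set T := {x | ENNReal.ofReal (2 ^ k) < g x}
  have hA (k : ℤ) : MeasurableSet (A k) := measurableSet_lt measurable_const hg
  calc upperLintegral volume (fun t => choquetIntegral μ (f ⁻¹' {t}) g)
      ≤ ∑' k : ℤ, upperLintegral volume fun t =>
          ENNReal.ofReal (2 ^ k) * codimH μ (f ⁻¹' {t} ∩ A k) :=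
        (upperLintegral_mono fun t => choquetIntegral_le_tsum μ _ g).trans
          (upperLintegral_tsum_le _)
    _ ≤ ∑' k : ℤ, ENNReal.ofReal (2 ^ k) * levelSetOuterMeasure volume μ f (A k) :=
        ENNReal.tsum_le_tsum fun k => upperLintegral_const_mul_le _ _
    _ ≤ ∑' k : ℤ, K * (ENNReal.ofReal (2 ^ k) * ∫⁻ x in A k, ρ x ∂μ) :=
        ENNReal.tsum_le_tsum fun k => by
          rw [mul_left_comm]
          gcongr
          exact h.levelSetOuterMeasure_le hc hf hρ hug hfin (hA k)
    _ ≤ K * (2 * ∫⁻ x, g x * ρ x ∂μ) := by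
        rw [ENNReal.tsum_mul_left]
        gcongr
        exact tsum_two_zpow_mul_setLIntegral_le hg hρ
    _ = _ := by ring

end Coarea

section UpperGradients

lemma isUpperGradient_const_of_lipschitzWith {X Y : Type*} [PseudoMetricSpace X]
    [PseudoEMetricSpace Y] {u : X → Y} {L : ℝ≥0} (hu : LipschitzWith L u) :
    IsUpperGradient u fun _ => (L : ℝ≥0∞) := fun γ =>
  calc edist (u γ.start) (u γ.finish) ≤ L * edist γ.start γ.finish := hu _ _
    _ ≤ L * edist γ.a γ.b := by
        gcongr
        simpa [UPath.start, UPath.finish] using γ.lip (left_mem_Icc.2 γ.hab) (right_mem_Icc.2 γ.hab)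
    _ = γ.integral fun _ => (L : ℝ≥0∞) := by
        rw [UPath.integral, setLIntegral_const, Real.volume_Icc, edist_comm, edist_dist,
          Real.dist_eq, abs_of_nonneg (sub_nonneg.2 γ.hab)]

lemma iSup_rpow_le_tsum {ι : Type*} {p : ℝ} (hp : 0 < p) (a : ι → ℝ≥0∞) :
    (⨆ i, a i) ^ p ≤ ∑' i, a i ^ p := by
  rw [← ENNReal.le_rpow_inv_iff hp]
  exact iSup_le fun i => (ENNReal.le_rpow_inv_iff hp).2 (ENNReal.le_tsum i)

variable {X Y : Type*} [PseudoMetricSpace X] [MeasurableSpace X] [PseudoEMetricSpace Y]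
  {μ : Measure X} {p : ℝ}

lemma exists_integral_eq_top_of_pathMod_eq_zero (hp : 0 < p) {Γ : Set (UPath X)}
    (hΓ : pathMod μ p Γ = 0) {ε : ℝ≥0∞} (hε : ε ≠ 0) :
    ∃ h : X → ℝ≥0∞, Measurable h ∧ (∀ γ ∈ Γ, γ.integral h = ⊤) ∧ ∫⁻ x, h x ^ p ∂μ ≤ ε := by
  obtain ⟨δ, hδ0, hδ⟩ := ENNReal.exists_pos_sum_of_countable' hε ℕ
  have hadm (n : ℕ) : ∃ h : X → ℝ≥0∞, (Measurable h ∧ ∀ γ ∈ Γ, 1 ≤ γ.integral h) ∧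
      ∫⁻ x, h x ^ p ∂μ < δ n / (n : ℝ≥0∞) ^ p := by
    have hlt : pathMod μ p Γ < δ n / (n : ℝ≥0∞) ^ p := by
      rw [hΓ]
      exact ENNReal.div_pos (hδ0 n).ne' (ENNReal.rpow_ne_top_of_nonneg hp.le (by simp))
    simpa only [pathMod, iInf_lt_iff, exists_prop] using hlt
  choose h hh hlt using hadm
  refine ⟨fun x => ⨆ n : ℕ, n * h n x, Measurable.iSup fun n => (hh n).1.const_mul _,
    fun γ hγ => ?_, ?_⟩
  · refine ENNReal.eq_top_of_forall_nnreal_le fun r => ?_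
    obtain ⟨n, hn⟩ := exists_nat_ge r
    calc (r : ℝ≥0∞) ≤ n * 1 := by rw [mul_one]; exact_mod_cast hn
      _ ≤ n * γ.integral (h n) := by gcongr; exact (hh n).2 γ hγ
      _ ≤ γ.integral fun x => n * h n x := lintegral_const_mul_le _ _
      _ ≤ γ.integral fun x => ⨆ n : ℕ, n * h n x :=
          lintegral_mono fun t => le_iSup (fun n : ℕ => n * h n (γ.toFun t)) n
  · calc ∫⁻ x, (⨆ n : ℕ, n * h n x) ^ p ∂μ ≤ ∫⁻ x, ∑' n : ℕ, (n * h n x) ^ p ∂μ :=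
          lintegral_mono fun x => iSup_rpow_le_tsum hp _
      _ = ∑' n : ℕ, (n : ℝ≥0∞) ^ p * ∫⁻ x, h n x ^ p ∂μ := by
          rw [lintegral_tsum fun n => (((hh n).1.const_mul _).pow_const p).aemeasurable]
          refine tsum_congr fun n => ?_
          simp_rw [ENNReal.mul_rpow_of_nonneg _ _ hp.le]
          exact lintegral_const_mul _ ((hh n).1.pow_const p)
      _ ≤ ∑' n, δ n := ENNReal.tsum_le_tsum fun n =>
          (mul_le_mul_right (hlt n).le _).trans ENNReal.mul_div_le
      _ ≤ ε := hδ.le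

variable {u : X → Y} {ρ : X → ℝ≥0∞}

lemma IsWeakUpperGradient.exists_isUpperGradient (h : IsWeakUpperGradient μ p u ρ) (hp : 0 < p)
    (hρ : Measurable ρ) {ε : ℝ≥0∞} (hε : ε ≠ 0) :
    ∃ ρ' : X → ℝ≥0∞, (Measurable ρ' ∧ IsUpperGradient u ρ') ∧
      ∫⁻ x, ρ' x ^ p ∂μ ≤ ∫⁻ x, ρ x ^ p ∂μ + ε := by
  obtain ⟨g, hg, hgtop, hgε⟩ := exists_integral_eq_top_of_pathMod_eq_zero hp h hε
  refine ⟨ρ ⊔ g, ⟨hρ.sup hg, fun γ => ?_⟩, ?_⟩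
  · by_cases hγ : edist (u γ.start) (u γ.finish) ≤ γ.integral ρ
    · exact hγ.trans (lintegral_mono fun t => le_sup_left)
    · have hle : γ.integral g ≤ γ.integral (ρ ⊔ g) := lintegral_mono fun t => le_sup_right
      exact le_top.trans ((hgtop γ hγ).symm.trans_le hle)
  · calc ∫⁻ x, (ρ x ⊔ g x) ^ p ∂μ ≤ ∫⁻ x, ρ x ^ p + g x ^ p ∂μ :=
          lintegral_mono fun x => by
            rw [(ENNReal.monotone_rpow_of_nonneg hp.le).map_sup]
            exact max_le_add_of_nonneg zero_le zero_le
      _ = ∫⁻ x, ρ x ^ p ∂μ + ∫⁻ x, g x ^ p ∂μ := lintegral_add_left (hρ.pow_const p) _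
      _ ≤ ∫⁻ x, ρ x ^ p ∂μ + ε := by gcongr

lemma IsUpperGradient.isWeakUpperGradient (h : IsUpperGradient u ρ) (hp : 0 < p) :
    IsWeakUpperGradient μ p u ρ := by
  refine nonpos_iff_eq_zero.1 ((iInf₂_le (fun _ => 0)
    ⟨measurable_const, fun γ hγ => absurd (h γ) hγ⟩).trans ?_)
  simp [hp]

lemma iInf_lintegral_rpow_isWeakUpperGradient (hp : 0 < p) (u : X → Y) :
    ⨅ (ρ : X → ℝ≥0∞) (_ : Measurable ρ ∧ IsWeakUpperGradient μ p u ρ), ∫⁻ x, ρ x ^ p ∂μ =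
      ⨅ (ρ : X → ℝ≥0∞) (_ : Measurable ρ ∧ IsUpperGradient u ρ), ∫⁻ x, ρ x ^ p ∂μ := by
  refine le_antisymm ?_ (le_iInf₂ fun ρ hρ => ENNReal.le_of_forall_pos_le_add fun ε hε _ => ?_)
  · exact le_iInf₂ fun ρ hρ => iInf₂_le ρ ⟨hρ.1, hρ.2.isWeakUpperGradient hp⟩
  · obtain ⟨ρ', hρ', hle⟩ := hρ.2.exists_isUpperGradient hp hρ.1 (ENNReal.coe_ne_zero.2 hε.ne')
    exact (iInf₂_le ρ' hρ').trans hle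

end UpperGradients

section CapacityAndModulus

variable {T : Type*} [MetricSpace T] [MeasurableSpace T] {μ : Measure T} {x₀ : T}
  {α₀ : Path x₀ x₀} {p q : ℝ}

lemma cap_eq_iInf_isUpperGradient (hp : 0 < p) :
    cap μ p x₀ α₀ = ⨅ (f : T → UnitAddCircle) (_ : DegOneLip x₀ α₀ f) (ρ : T → ℝ≥0∞)
      (_ : Measurable ρ ∧ IsUpperGradient f ρ), ∫⁻ x, ρ x ^ p ∂μ := by
  simp only [cap, iInf_lintegral_rpow_isWeakUpperGradient hp]

lemma le_cap_rpow_iff (hp : 0 < p) {b : ℝ≥0∞} :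
    b ≤ cap μ p x₀ α₀ ^ (1 / p) ↔
      ∀ f : T → UnitAddCircle, DegOneLip x₀ α₀ f → ∀ ρ : T → ℝ≥0∞, Measurable ρ →
        IsUpperGradient f ρ → b ≤ (∫⁻ x, ρ x ^ p ∂μ) ^ (1 / p) := by
  simp only [one_div, ENNReal.le_rpow_inv_iff hp, cap_eq_iInf_isUpperGradient hp, le_iInf_iff,
    and_imp]

lemma le_surfMod_rpow_iff (hq : 0 < q) {b : ℝ≥0∞} :
    b ≤ surfMod μ q x₀ α₀ ^ (1 / q) ↔
      ∀ g : T → ℝ≥0∞, Measurable g → (∀ S ∈ Surfaces μ x₀ α₀, 1 ≤ choquetIntegral μ S g) →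
        b ≤ (∫⁻ x, g x ^ q ∂μ) ^ (1 / q) := by
  simp only [one_div, ENNReal.le_rpow_inv_iff hq, surfMod, surfModOf, le_iInf_iff, and_imp]

lemma cap_ne_top [IsFiniteMeasure μ] (hp : 0 < p) (hT : ∃ f, DegOneLip x₀ α₀ f) :
    cap μ p x₀ α₀ ≠ ⊤ := by
  obtain ⟨f, hf⟩ := hT
  obtain ⟨L, hL⟩ := hf.1
  rw [cap_eq_iInf_isUpperGradient hp]
  refine ne_top_of_le_ne_top ?_ ((iInf₂_le f hf).trans (iInf₂_le (fun _ => (L : ℝ≥0∞))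
    ⟨measurable_const, isUpperGradient_const_of_lipschitzWith hL⟩))
  rw [lintegral_const]
  exact ENNReal.mul_ne_top (ENNReal.rpow_ne_top_of_nonneg hp.le (by simp)) (measure_ne_top _ _)

end CapacityAndModulus

section LowerBound

lemma HasDegree.sub_const {T : Type*} [TopologicalSpace T] {x₀ : T} {α₀ : Path x₀ x₀}
    {f : T → UnitAddCircle} {k : ℤ} (h : HasDegree x₀ α₀ f k) (t : UnitAddCircle) :
    HasDegree x₀ α₀ (fun x => f x - t) k := by
  obtain ⟨hf, hdeg⟩ := h
  refine ⟨hf.sub continuous_const, fun x γ hγ => ?_⟩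
  have hcont : Continuous fun y : UnitAddCircle => y - t := continuous_id.sub continuous_const
  have hloop : stdLoop k (f x - t) = (stdLoop k (f x)).map hcont :=
    Path.ext (funext fun s => add_sub_right_comm (f x) _ t |>.symm)
  change Path.Homotopic _ (stdLoop k (f x - t))
  rw [hloop]
  exact (hdeg x γ hγ).map ⟨_, hcont⟩

lemma lintegral_ne_top_of_lintegral_rpow_ne_top {X : Type*} [MeasurableSpace X] {ν : Measure X}
    [IsFiniteMeasure ν] {p : ℝ} (hp : 1 ≤ p) {ρ : X → ℝ≥0∞} (h : ∫⁻ x, ρ x ^ p ∂ν ≠ ⊤) :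
    ∫⁻ x, ρ x ∂ν ≠ ⊤ := by
  refine ne_top_of_le_ne_top (b := ∫⁻ x, 1 + ρ x ^ p ∂ν) ?_ (lintegral_mono fun x => ?_)
  · rw [lintegral_add_left measurable_const, lintegral_const, one_mul]
    finiteness
  · rcases le_total (ρ x) 1 with hx | hx
    · exact hx.trans le_self_add
    · exact le_add_of_nonneg_of_le zero_le
        (by simpa using ENNReal.rpow_le_rpow_of_exponent_le hx hp)

lemma coareaConst_pos {c : ℝ≥0} (hc : 0 < c) (P : ℝ≥0) : 0 < coareaConst c P := by
  unfold coareaConst cheegerConst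
  positivity

variable {T : Type*} [MetricSpace T] [MeasurableSpace T] [BorelSpace T] [BoundedSpace T]
  {μ : Measure T} {x₀ : T} {α₀ : Path x₀ x₀} {CP lP p q : ℝ} {c : ℝ≥0} {f : T → UnitAddCircle}
  {ρ g : T → ℝ≥0∞}

lemma SupportsPoincare.ae_preimage_singleton_mem_surfaces (h : SupportsPoincare μ CP lP)
    (hc : IsGloballyDoubling μ c) (hf : DegOneLip x₀ α₀ f) (hρ : Measurable ρ)
    (hug : IsUpperGradient f ρ) (hfin : ∫⁻ x, ρ x ∂μ ≠ ⊤) :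
    ∀ᵐ t : UnitAddCircle, f ⁻¹' {t} ∈ Surfaces μ x₀ α₀ := by
  have : Nonempty T := ⟨x₀⟩
  obtain ⟨⟨L, hL⟩, hdeg⟩ := hf
  have htop : levelSetOuterMeasure volume μ f univ ≠ ⊤ := by
    refine ne_top_of_le_ne_top ?_
      (h.levelSetOuterMeasure_le hc hL hρ hug hfin MeasurableSet.univ)
    rw [setLIntegral_univ]
    finiteness
  filter_upwards [ae_lt_top_of_upperLintegral_ne_top htop] with t ht
  refine ⟨fun x => f x - t, hdeg.sub_const t, ?_, by rwa [inter_univ] at ht⟩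
  ext x
  simp [sub_eq_zero]

lemma SupportsPoincare.one_le_mul_lintegral_mul (h : SupportsPoincare μ CP lP)
    (hc : IsGloballyDoubling μ c) (hf : DegOneLip x₀ α₀ f) (hρ : Measurable ρ)
    (hug : IsUpperGradient f ρ) (hfin : ∫⁻ x, ρ x ∂μ ≠ ⊤) (hg : Measurable g)
    (hadm : ∀ S ∈ Surfaces μ x₀ α₀, 1 ≤ choquetIntegral μ S g) :
    1 ≤ 2 * coareaConst c CP.toNNReal * ∫⁻ x, g x * ρ x ∂μ := by
  have : Nonempty T := ⟨x₀⟩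
  obtain ⟨L, hL⟩ := hf.1
  calc (1 : ℝ≥0∞) = ∫⁻ _ : UnitAddCircle, 1 := by simp
    _ ≤ upperLintegral volume fun t => choquetIntegral μ (f ⁻¹' {t}) g :=
        lintegral_le_upperLintegral <|
          (h.ae_preimage_singleton_mem_surfaces hc hf hρ hug hfin).mono fun t => hadm _
    _ ≤ 2 * coareaConst c CP.toNNReal * ∫⁻ x, g x * ρ x ∂μ :=
        h.upperLintegral_choquetIntegral_le hc hL hρ hug hfin hg

lemma SupportsPoincare.inv_lintegral_rpow_le (h : SupportsPoincare μ CP lP)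
    (hc : IsGloballyDoubling μ c) (hc0 : 0 < c) (hpq : p.HolderConjugate q)
    (hf : DegOneLip x₀ α₀ f) (hρ : Measurable ρ) (hug : IsUpperGradient f ρ) (hg : Measurable g)
    (hadm : ∀ S ∈ Surfaces μ x₀ α₀, 1 ≤ choquetIntegral μ S g) :
    ((∫⁻ x, g x ^ q ∂μ) ^ (1 / q))⁻¹ ≤
      2 * coareaConst c CP.toNNReal * (∫⁻ x, ρ x ^ p ∂μ) ^ (1 / p) := by
  have : Nonempty T := ⟨x₀⟩
  have := h.isFiniteMeasure
  set K := coareaConst c CP.toNNReal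
  set A := (∫⁻ x, ρ x ^ p ∂μ) ^ (1 / p)
  set B := (∫⁻ x, g x ^ q ∂μ) ^ (1 / q)
  have hK : (2 * K : ℝ≥0∞) ≠ 0 := by
    simpa using (coareaConst_pos hc0 _).ne'
  rcases eq_or_ne A ⊤ with hA | hA
  · rw [hA, ENNReal.mul_top hK]
    exact le_top
  have hfin : ∫⁻ x, ρ x ∂μ ≠ ⊤ := lintegral_ne_top_of_lintegral_rpow_ne_top hpq.lt.le fun htop =>
    hA (by simp only [A, htop, ENNReal.top_rpow_of_pos hpq.one_div_pos])
  have hone : 1 ≤ 2 * K * (A * B) :=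
    (h.one_le_mul_lintegral_mul hc hf hρ hug hfin hg hadm).trans <| by
      simp_rw [mul_comm (g _)]
      gcongr
      exact ENNReal.lintegral_mul_le_Lp_mul_Lq μ hpq hρ.aemeasurable hg.aemeasurable
  rw [← mul_assoc] at hone
  refine (ENNReal.inv_le_iff_le_mul (fun htop => ?_) fun _ h0 => ?_).2
    (hone.trans_eq (mul_comm _ _))
  · exact absurd htop (by finiteness)
  · simp [h0] at hone

lemma SupportsPoincare.inv_surfMod_rpow_le (h : SupportsPoincare μ CP lP)
    (hc : IsGloballyDoubling μ c) (hc0 : 0 < c) (hpq : p.HolderConjugate q) :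
    (surfMod μ q x₀ α₀ ^ (1 / q))⁻¹ ≤
      2 * coareaConst c CP.toNNReal * cap μ p x₀ α₀ ^ (1 / p) := by
  have hK : (2 * coareaConst c CP.toNNReal : ℝ≥0∞) ≠ 0 := by
    simpa using (coareaConst_pos hc0 _).ne'
  rw [ENNReal.inv_le_iff_inv_le, le_surfMod_rpow_iff hpq.symm.pos]
  intro g hg hadm
  rw [ENNReal.inv_le_iff_inv_le, ← ENNReal.div_le_iff' hK (by finiteness),
    le_cap_rpow_iff hpq.pos]
  exact fun f hf ρ hρ hug => ENNReal.div_le_of_le_mul'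
    (h.inv_lintegral_rpow_le hc hc0 hpq hf hρ hug hg hadm)

end LowerBound

end Duality

open Duality in
theorem statement1_general (Cμ : ℝ≥0∞) (CP lP : ℝ) :
    ∃ C : ℝ≥0∞, 0 < C ∧ C < ⊤ ∧
      ∀ (T : Type*) [MetricSpace T] [MeasurableSpace T] [BorelSpace T] [BoundedSpace T]
        (μ : Measure T) (x₀ : T) (α₀ : Path x₀ x₀),
        IsDoubling μ Cμ → SupportsPoincare μ CP lP →
        (∃ f : T → UnitAddCircle, DegOneLip x₀ α₀ f) →
        ∀ p : ℝ, 1 < p →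
          (0 < cap μ p x₀ α₀ →
            C⁻¹ ≤ cap μ p x₀ α₀ ^ (1 / p) *
                surfMod μ (p / (p - 1)) x₀ α₀ ^ (1 / (p / (p - 1)))) ∧
          (cap μ p x₀ α₀ = 0 → surfMod μ (p / (p - 1)) x₀ α₀ = ⊤) := by
  have hc0 : 0 < max 1 Cμ.toNNReal := lt_max_of_lt_left one_pos
  have hK := coareaConst_pos hc0 CP.toNNReal
  refine ⟨2 * coareaConst (max 1 Cμ.toNNReal) CP.toNNReal, by simpa using hK, by finiteness, ?_⟩
  intro T _ _ _ _ μ x₀ α₀ hD hP hT p hp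
  have : Nonempty T := ⟨x₀⟩
  have := hP.isFiniteMeasure
  have hpq : p.HolderConjugate (p / (p - 1)) := .conjExponent hp
  have hinv := hP.inv_surfMod_rpow_le (x₀ := x₀) (α₀ := α₀) hD.isGloballyDoubling hc0 hpq
  have hcap := cap_ne_top (μ := μ) hpq.pos hT
  refine ⟨fun hpos => ?_, fun hzero => ?_⟩
  · have hcap0 : cap μ p x₀ α₀ ^ (1 / p) ≠ 0 := (ENNReal.rpow_pos hpos hcap).ne'
    have hcaptop : cap μ p x₀ α₀ ^ (1 / p) ≠ ⊤ :=
      ENNReal.rpow_ne_top_of_nonneg hpq.one_div_pos.le hcap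
    rwa [ENNReal.inv_le_iff_inv_le, ENNReal.mul_inv (.inr hcaptop) (.inr hcap0), ← div_eq_mul_inv,
      ENNReal.div_le_iff' hcap0 hcaptop] at hinv
  · rw [hzero, ENNReal.zero_rpow_of_pos hpq.one_div_pos, mul_zero, nonpos_iff_eq_zero,
      ENNReal.inv_eq_zero, ENNReal.rpow_eq_top_iff_of_pos hpq.symm.one_div_pos] at hinv
    exact hinv

open Duality in
/-- **Theorem 2.2 (lower bound).** -/
theorem statement1 (Cμ : ℝ≥0∞) (CP lP : ℝ) :
    ∃ C : ℝ≥0∞, 0 < C ∧ C < ⊤ ∧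
      ∀ (T : Type) [MetricSpace T] [MeasurableSpace T] [BorelSpace T] [CompactSpace T]
        (μ : Measure T) (x₀ : T) (α₀ : Path x₀ x₀),
        Standing μ Cμ CP lP x₀ α₀ →
        ∀ p : ℝ, 1 < p →
          (0 < cap μ p x₀ α₀ →
            C⁻¹ ≤ cap μ p x₀ α₀ ^ (1 / p) *
                surfMod μ (p / (p - 1)) x₀ α₀ ^ (1 / (p / (p - 1)))) ∧
          (cap μ p x₀ α₀ = 0 → surfMod μ (p / (p - 1)) x₀ α₀ = ⊤) := by
  obtain ⟨C, hC0, hCtop, hC⟩ := statement1_general Cμ CP lP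
  exact ⟨C, hC0, hCtop, fun T _ _ _ _ μ x₀ α₀ h => hC T μ x₀ α₀ h.1 h.2.1 h.2.2.2.2⟩
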